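/- arXiv:2511.10509 — 6 statements merged into one kernel-verified Lean document; each statement's English description precedes it below -/
import Mathlib

section
/- There exist universal constants c > 0 and γ > 0 such that for every integer n ≥ 2 there are points p₁, …, pₙ in the unit square [0,1]² and lines ℓ₁, …, ℓₙ in ℝ² such that pᵢ ∈ ℓᵢ for every i, and for all i ≠ j the Euclidean distance from pᵢ to the line ℓⱼ is at least c · n^(γ−1). -/
/-!
Let `p` be a prime and `d` a nonresidue modulo `p`, so that `ℤ√d` modulo `p` is the field with `p²`
elements. Through the point `(x, y)` of the Hermitian curve `Re y = N x` over this field, the line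
of slope `2 x̄` is tangent and meets the curve at no other point. Lift this to `ℤ√d`, taking `x` in
a set whose elements are distinct modulo `p`: the displacement of a lifted point above the tangent
at another one is then a nonzero element of `ℤ√d`. Its norm is a nonzero integer, hence at least `1`
in absolute value, and its conjugate is `O(X²)` when `x` and `y` range over elements of size `X` and
`X²` together with their conjugates. So the displacement is at least of order `X⁻²`, and of order
`X⁻⁴` after rescaling to the unit square. With `p ≈ r²` and `X ≈ r³` there are `r² · r²` choices of
`x` and `r⁴ · r⁵` choices of `y`, which gives `r¹³` points at separation of order `r⁻¹²`, that is,
`γ = 1/13`.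
-/

open Zsqrtd

section SlopeLine

theorem abs_inner_vsub_le_norm_mul_infDist {V P : Type*} [NormedAddCommGroup V]
    [InnerProductSpace ℝ V] [MetricSpace P] [NormedAddTorsor V P] {s : AffineSubspace ℝ P} {v : V}
    (hv : v ∈ s.directionᗮ) {q : P} (hq : q ∈ s) (x : P) :
    |inner ℝ v (x -ᵥ q)| ≤ ‖v‖ * Metric.infDist x s := by
  have le_dist : ∀ y ∈ s, |inner ℝ v (x -ᵥ q)| ≤ ‖v‖ * dist x y := fun y hy => by
    have inner_eq_zero : inner ℝ v (y -ᵥ q) = 0 :=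
      Submodule.inner_left_of_mem_orthogonal (AffineSubspace.vsub_mem_direction hy hq) hv
    rw [← vsub_add_vsub_cancel x y q, inner_add_right, inner_eq_zero, add_zero, dist_eq_norm_vsub V]
    exact abs_real_inner_le_norm _ _
  rcases eq_or_ne v 0 with rfl | hv0
  · simp
  · rw [← div_le_iff₀' (norm_pos_iff.2 hv0), Metric.le_infDist ⟨q, hq⟩]
    exact fun y hy => (div_le_iff₀' (norm_pos_iff.2 hv0)).2 (le_dist y hy)

/-- The line of slope `m` through the point `q` of the Euclidean plane. -/
noncomputable def slopeLine (q : EuclideanSpace ℝ (Fin 2)) (m : ℝ) :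
    AffineSubspace ℝ (EuclideanSpace ℝ (Fin 2)) :=
  AffineSubspace.mk' q (Submodule.span ℝ {!₂[1, m]})

theorem self_mem_slopeLine (q : EuclideanSpace ℝ (Fin 2)) (m : ℝ) : q ∈ slopeLine q m :=
  AffineSubspace.self_mem_mk' _ _

theorem finrank_direction_slopeLine (q : EuclideanSpace ℝ (Fin 2)) (m : ℝ) :
    Module.finrank ℝ (slopeLine q m).direction = 1 := by
  rw [slopeLine, AffineSubspace.direction_mk']
  refine finrank_span_singleton fun h => ?_
  simpa using congr($h 0)

theorem abs_sub_le_sqrt_mul_infDist_slopeLine (x q : EuclideanSpace ℝ (Fin 2)) (m : ℝ) :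
    |x 1 - q 1 - m * (x 0 - q 0)| ≤ √(1 + m ^ 2) * Metric.infDist x (slopeLine q m) := by
  have normal_mem : !₂[-m, 1] ∈ (slopeLine q m).directionᗮ := by
    rw [slopeLine, AffineSubspace.direction_mk', Submodule.mem_orthogonal_singleton_iff_inner_right]
    simp [PiLp.inner_apply, Fin.sum_univ_two]
  have norm_normal : ‖!₂[-m, 1]‖ = √(1 + m ^ 2) := by
    simp [EuclideanSpace.norm_eq, Fin.sum_univ_two, add_comm]
  have inner_normal : inner ℝ !₂[-m, 1] (x -ᵥ q) = x 1 - q 1 - m * (x 0 - q 0) := by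
    simp only [PiLp.inner_apply, Fin.sum_univ_two, vsub_eq_sub, PiLp.sub_apply,
      Matrix.cons_val_zero, Matrix.cons_val_one, RCLike.inner_apply, conj_trivial]
    ring
  rw [← norm_normal, ← inner_normal]
  exact abs_inner_vsub_le_norm_mul_infDist normal_mem (self_mem_slopeLine q m) x

end SlopeLine

/-- The existence of points of the unit square, indexed by `ι`, and of a line through each of them,
such that every point has distance at least `δ` from the lines through the other points. -/
def HasSeparatedLines (ι : Type*) (δ : ℝ) : Prop :=
  ∃ (p : ι → EuclideanSpace ℝ (Fin 2)) (ℓ : ι → AffineSubspace ℝ (EuclideanSpace ℝ (Fin 2))),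
    (∀ i, Module.finrank ℝ (ℓ i).direction = 1) ∧
    (∀ i, ∀ t, p i t ∈ Set.Icc (0 : ℝ) 1) ∧
    (∀ i, p i ∈ ℓ i) ∧
    (∀ i j, i ≠ j → δ ≤ Metric.infDist (p i) (ℓ j : Set (EuclideanSpace ℝ (Fin 2))))

theorem HasSeparatedLines.of_embedding {ι κ : Type*} {δ ε : ℝ} (h : HasSeparatedLines ι δ)
    (f : κ ↪ ι) (hε : ε ≤ δ) : HasSeparatedLines κ ε := by
  obtain ⟨p, ℓ, hdim, hsquare, hmem, hdist⟩ := h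
  exact ⟨p ∘ f, ℓ ∘ f, fun i => hdim _, fun i => hsquare _, fun i => hmem _,
    fun i j hij => hε.trans (hdist _ _ (f.injective.ne hij))⟩

section TangentGap

variable {d : ℤ}

/-- The displacement of the point `w` above the line of slope `2 x̄` through the point `z = (x, y)`.
If `z` lies on the curve `Re y = N x` modulo `p`, that line reduces to the tangent at `z`. -/
def tangentGap (z w : ℤ√d × ℤ√d) : ℤ√d :=
  w.2 - z.2 - 2 * star z.1 * (w.1 - z.1)

theorem re_tangentGap (z w : ℤ√d × ℤ√d) :
    (tangentGap z w).re =
      (w.2.re - w.1.norm) - (z.2.re - z.1.norm) + (w.1 - z.1).norm := by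
  simp only [tangentGap, norm_def, re_sub, im_sub, re_mul, im_mul, re_star, im_star, re_ofNat,
    im_ofNat]
  ring

/-- The points `(x, y)` with coordinates in `ℤ√d` that lie, modulo `p`, on the Hermitian curve
`Re y = N x`. -/
def hermitianCurve (p : ℕ) (d : ℤ) : Set (ℤ√d × ℤ√d) :=
  {z | (p : ℤ) ∣ z.2.re - z.1.norm}

theorem tangentGap_ne_zero {p : ℕ} [Fact p.Prime] (hd : legendreSym p d = -1)
    {z w : ℤ√d × ℤ√d} (hz : z ∈ hermitianCurve p d) (hw : w ∈ hermitianCurve p d)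
    (hre : |(w.1 - z.1).re| < p) (him : |(w.1 - z.1).im| < p) (hzw : z ≠ w) :
    tangentGap z w ≠ 0 := by
  intro hgap
  have dvd_norm : (p : ℤ) ∣ (w.1 - z.1).norm := by
    have h := re_tangentGap z w
    rw [hgap, re_zero] at h
    exact (dvd_add_right (dvd_sub hw hz)).1 (h ▸ dvd_zero _)
  obtain ⟨dvd_re, dvd_im⟩ := legendreSym.prime_dvd_of_eq_neg_one hd (x := (w.1 - z.1).re)
    (y := (w.1 - z.1).im) (by simpa only [norm_def, sq, mul_assoc] using dvd_norm)
  have fst_sub_eq_zero : w.1 - z.1 = 0 :=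
    Zsqrtd.ext (Int.eq_zero_of_abs_lt_dvd dvd_re hre) (Int.eq_zero_of_abs_lt_dvd dvd_im him)
  have snd_sub_eq_zero : w.2 - z.2 = 0 := by simpa [tangentGap, fst_sub_eq_zero] using hgap
  exact hzw (Prod.ext (sub_eq_zero.1 fst_sub_eq_zero).symm (sub_eq_zero.1 snd_sub_eq_zero).symm)

theorem one_le_abs_toReal_mul_abs_toReal_star (hd₀ : 0 ≤ d) (hd : ∀ n : ℤ, d ≠ n * n) {a : ℤ√d}
    (ha : a ≠ 0) : 1 ≤ |toReal hd₀ a| * |toReal hd₀ (star a)| := by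
  rw [← abs_mul, ← map_mul, ← norm_eq_mul_conj, map_intCast]
  exact_mod_cast Int.one_le_abs (mt (norm_eq_zero hd a).1 ha)

/-- The points `(x, y)` whose coordinates dominate their conjugates and satisfy `x ≤ X` and
`y ≤ X²`. Domination by `x` and `y` forces these to be nonnegative. -/
def parabolicBox (hd₀ : 0 ≤ d) (X : ℝ) : Set (ℤ√d × ℤ√d) :=
  {z | (|toReal hd₀ (star z.1)| ≤ toReal hd₀ z.1 ∧ toReal hd₀ z.1 ≤ X) ∧
    (|toReal hd₀ (star z.2)| ≤ toReal hd₀ z.2 ∧ toReal hd₀ z.2 ≤ X ^ 2)}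

theorem abs_toReal_star_tangentGap_le {hd₀ : 0 ≤ d} {X : ℝ} {z w : ℤ√d × ℤ√d}
    (hz : z ∈ parabolicBox hd₀ X) (hw : w ∈ parabolicBox hd₀ X) :
    |toReal hd₀ (star (tangentGap z w))| ≤ 6 * X ^ 2 := by
  obtain ⟨⟨hzx, hzX⟩, hzy, hzY⟩ := hz
  obtain ⟨⟨hwx, hwX⟩, hwy, hwY⟩ := hw
  set σ : ℤ√d → ℝ := fun a => toReal hd₀ (star a) with hσ
  have star_gap : σ (tangentGap z w) =
      σ w.2 - σ z.2 - 2 * toReal hd₀ z.1 * (σ w.1 - σ z.1) := by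
    simp only [hσ, tangentGap, star_sub, star_mul', star_ofNat, star_star, map_sub, map_mul,
      map_ofNat]
  have abs_snd : |σ w.2 - σ z.2| ≤ 2 * X ^ 2 := (abs_sub _ _).trans (by linarith)
  have abs_fst : |σ w.1 - σ z.1| ≤ 2 * X := (abs_sub _ _).trans (by linarith)
  have fst_nonneg : 0 ≤ toReal hd₀ z.1 := (abs_nonneg _).trans hzx
  calc |σ (tangentGap z w)|
      ≤ |σ w.2 - σ z.2| + 2 * toReal hd₀ z.1 * |σ w.1 - σ z.1| := by
        rw [star_gap]
        refine (abs_sub _ _).trans_eq ?_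
        rw [abs_mul, abs_of_nonneg (mul_nonneg zero_le_two fst_nonneg)]
    _ ≤ 2 * X ^ 2 + 2 * X * (2 * X) := by
        have : 0 ≤ X := fst_nonneg.trans hzX
        gcongr
    _ = 6 * X ^ 2 := by ring

/-- The point `(x / X, y / X²)` of the plane; it lies in the unit square if `z = (x, y)` lies in the
parabolic box of size `X`. -/
noncomputable def scaledPoint (hd₀ : 0 ≤ d) (X : ℝ) (z : ℤ√d × ℤ√d) : EuclideanSpace ℝ (Fin 2) :=
  !₂[toReal hd₀ z.1 / X, toReal hd₀ z.2 / X ^ 2]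

/-- The image under `(x, y) ↦ (x / X, y / X²)` of the line of slope `2 x̄` through `z = (x, y)`. -/
noncomputable def scaledTangent (hd₀ : 0 ≤ d) (X : ℝ) (z : ℤ√d × ℤ√d) :
    AffineSubspace ℝ (EuclideanSpace ℝ (Fin 2)) :=
  slopeLine (scaledPoint hd₀ X z) (2 * toReal hd₀ (star z.1) / X)

theorem scaledPoint_mem_Icc {hd₀ : 0 ≤ d} {X : ℝ} {z : ℤ√d × ℤ√d}
    (hz : z ∈ parabolicBox hd₀ X) (t : Fin 2) : scaledPoint hd₀ X z t ∈ Set.Icc (0 : ℝ) 1 := by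
  obtain ⟨⟨hx, hxX⟩, hy, hyX⟩ := hz
  have x_nonneg := (abs_nonneg _).trans hx
  have y_nonneg := (abs_nonneg _).trans hy
  have hX := x_nonneg.trans hxX
  fin_cases t
  · exact ⟨div_nonneg x_nonneg hX, div_le_one_of_le₀ hxX hX⟩
  · exact ⟨div_nonneg y_nonneg (sq_nonneg X), div_le_one_of_le₀ hyX (sq_nonneg X)⟩

theorem abs_toReal_tangentGap_le_infDist {hd₀ : 0 ≤ d} {X : ℝ} (hX : 0 < X) {z : ℤ√d × ℤ√d}
    (hz : |toReal hd₀ (star z.1)| ≤ X) (w : ℤ√d × ℤ√d) :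
    |toReal hd₀ (tangentGap z w)| / X ^ 2 ≤
      3 * Metric.infDist (scaledPoint hd₀ X w) (scaledTangent hd₀ X z) := by
  set m := 2 * toReal hd₀ (star z.1) / X
  have scaled_gap : toReal hd₀ (tangentGap z w) / X ^ 2 =
      scaledPoint hd₀ X w 1 - scaledPoint hd₀ X z 1 -
        m * (scaledPoint hd₀ X w 0 - scaledPoint hd₀ X z 0) := by
    simp only [m, scaledPoint, tangentGap, map_sub, map_mul, map_ofNat, PiLp.toLp_apply,
      Matrix.cons_val_zero, Matrix.cons_val_one]
    field_simp
  have abs_slope : |m| ≤ 2 := by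
    rw [abs_div, abs_of_pos hX, div_le_iff₀ hX, abs_mul, abs_two]
    linarith
  have sqrt_le : √(1 + m ^ 2) ≤ 3 := by
    rw [Real.sqrt_le_iff]
    have := sq_le_sq' (abs_le.1 abs_slope).1 (abs_le.1 abs_slope).2
    constructor <;> linarith
  calc |toReal hd₀ (tangentGap z w)| / X ^ 2
      = |toReal hd₀ (tangentGap z w) / X ^ 2| := by rw [abs_div, abs_sq]
    _ ≤ √(1 + m ^ 2) * Metric.infDist (scaledPoint hd₀ X w) (scaledTangent hd₀ X z) :=
        scaled_gap ▸ abs_sub_le_sqrt_mul_infDist_slopeLine _ _ m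
    _ ≤ 3 * Metric.infDist (scaledPoint hd₀ X w) (scaledTangent hd₀ X z) := by
        gcongr
        exact Metric.infDist_nonneg

theorem hasSeparatedLines_of_tangentGap_ne_zero {ι : Type*} {hd₀ : 0 ≤ d}
    (hd : ∀ n : ℤ, d ≠ n * n) {X : ℝ} (hX : 0 < X) {z : ι → ℤ√d × ℤ√d}
    (hz : ∀ i, z i ∈ parabolicBox hd₀ X)
    (hgap : ∀ i j, i ≠ j → tangentGap (z i) (z j) ≠ 0) :
    HasSeparatedLines ι (1 / (18 * X ^ 4)) := by
  refine ⟨fun i => scaledPoint hd₀ X (z i), fun i => scaledTangent hd₀ X (z i),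
    fun i => finrank_direction_slopeLine _ _, fun i => scaledPoint_mem_Icc (hz i),
    fun i => self_mem_slopeLine _ _, fun i j hij => ?_⟩
  have gap_lower : 1 ≤ |toReal hd₀ (tangentGap (z j) (z i))| * (6 * X ^ 2) :=
    (one_le_abs_toReal_mul_abs_toReal_star hd₀ hd (hgap j i hij.symm)).trans
      (mul_le_mul_of_nonneg_left (abs_toReal_star_tangentGap_le (hz j) (hz i)) (abs_nonneg _))
  have gap_upper := abs_toReal_tangentGap_le_infDist hX ((hz j).1.1.trans (hz j).1.2) (z i)
  rw [div_le_iff₀ (by positivity)] at gap_upper ⊢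
  calc (1 : ℝ) ≤ |toReal hd₀ (tangentGap (z j) (z i))| * (6 * X ^ 2) := gap_lower
    _ ≤ 3 * Metric.infDist (scaledPoint hd₀ X (z i)) (scaledTangent hd₀ X (z j)) * X ^ 2 *
          (6 * X ^ 2) := by gcongr
    _ = Metric.infDist (scaledPoint hd₀ X (z i)) (scaledTangent hd₀ X (z j)) * (18 * X ^ 4) := by
        ring

end TangentGap

section CurvePoint

variable {d : ℤ}

/-- A parametrization by `(x, η)` of the points `(x, y)` on the Hermitian curve modulo `p`:
`Im y = Im η`, and `Re η` is the quotient of `Re y` by `p`, the remainder being that of `N x`. -/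
def curvePoint (p : ℕ) (q : ℤ√d × ℤ√d) : ℤ√d × ℤ√d :=
  (q.1, ⟨q.1.norm % p + p * q.2.re, q.2.im⟩)

theorem curvePoint_mem_hermitianCurve (p : ℕ) (q : ℤ√d × ℤ√d) :
    curvePoint p q ∈ hermitianCurve p d := by
  refine ⟨q.2.re - q.1.norm / p, ?_⟩
  simp only [curvePoint]
  linear_combination Int.emod_add_mul_ediv q.1.norm p

theorem curvePoint_injective {p : ℕ} (hp : p ≠ 0) :
    Function.Injective (curvePoint (d := d) p) := by
  rintro ⟨x, η⟩ ⟨x', η'⟩ h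
  simp only [curvePoint, Prod.mk.injEq, Zsqrtd.mk.injEq] at h
  obtain ⟨rfl, hre, him⟩ := h
  have : η.re = η'.re := mul_left_cancel₀ (Nat.cast_ne_zero.2 hp) (add_left_cancel hre)
  exact Prod.ext rfl (Zsqrtd.ext this him)

theorem abs_toReal_star_le_toReal (hd₀ : 0 ≤ d) {a : ℤ√d} (hre : 0 ≤ a.re) (him : 0 ≤ a.im) :
    |toReal hd₀ (star a)| ≤ toReal hd₀ a := by
  have : (0 : ℝ) ≤ a.re := Int.cast_nonneg hre
  have : 0 ≤ (a.im : ℝ) * √d := mul_nonneg (Int.cast_nonneg him) (Real.sqrt_nonneg _)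
  simp only [toReal_apply, re_star, im_star, Int.cast_neg, abs_le]
  constructor <;> linarith

theorem toReal_le_add_mul (hd₀ : 0 ≤ d) {a : ℤ√d} {A B C : ℝ} (hre : a.re ≤ A) (him : a.im ≤ B)
    (hB : 0 ≤ B) (hC : √d ≤ C) : toReal hd₀ a ≤ A + B * C := by
  rw [toReal_apply]
  gcongr

theorem sqrt_intCast_le_two_mul {r : ℕ} (hd : d ≤ 2 * r ^ 2) : √(d : ℝ) ≤ 2 * r := by
  have : (d : ℝ) ≤ 2 * r ^ 2 := by exact_mod_cast hd
  rw [Real.sqrt_le_iff]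
  exact ⟨by positivity, by nlinarith⟩

theorem emod_add_mul_lt {p k b : ℤ} (hp : 0 < p) (hk : k < b) (a : ℤ) : a % p + p * k < p * b :=
  calc a % p + p * k < p * (k + 1) := by linarith [Int.emod_lt_of_pos a hp]
    _ ≤ p * b := mul_le_mul_of_nonneg_left hk hp.le

/-- The parameters of `curvePoint`: `x` ranges over a grid of size `r² × r²` and `η` over a grid of
size `r⁴ × r⁵`. -/
def gridPoint (d : ℤ) (r : ℕ) (i : Fin (r ^ 2) × Fin (r ^ 2) × Fin (r ^ 4) × Fin (r ^ 5)) :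
    ℤ√d × ℤ√d :=
  (⟨(i.1 : ℕ), (i.2.1 : ℕ)⟩, ⟨(i.2.2.1 : ℕ), (i.2.2.2 : ℕ)⟩)

theorem gridPoint_injective (d : ℤ) (r : ℕ) : Function.Injective (gridPoint d r) := by
  rintro ⟨u, v, a, b⟩ ⟨u', v', a', b'⟩ h
  simpa [gridPoint, Fin.ext_iff, and_assoc] using h

theorem curvePoint_gridPoint_mem_parabolicBox (hd₀ : 0 ≤ d) {p r : ℕ} (hp : 0 < p)
    (hpr : p ≤ 2 * r ^ 2) (hdp : d ≤ p) (i) :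
    curvePoint p (gridPoint d r i) ∈ parabolicBox hd₀ (3 * r ^ 3) := by
  obtain ⟨u, v, a, b⟩ := i
  have r_ne_zero : r ≠ 0 := by
    rintro rfl
    lia
  have one_le_r : (1 : ℝ) ≤ r := Nat.one_le_cast.2 (Nat.pos_of_ne_zero r_ne_zero)
  have sqrt_le : √(d : ℝ) ≤ 2 * r := sqrt_intCast_le_two_mul (by lia)
  have cast_le {k : ℕ} (t : Fin k) : (((t : ℕ) : ℤ) : ℝ) ≤ k := by exact_mod_cast t.isLt.le
  have hp' : (0 : ℤ) < p := Int.natCast_pos.2 hp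
  have re_nonneg (N : ℤ) : 0 ≤ N % p + p * (a : ℕ) :=
    add_nonneg (Int.emod_nonneg N hp'.ne') (by positivity)
  have re_le (N : ℤ) : N % p + p * (a : ℕ) ≤ 2 * (r : ℤ) ^ 6 :=
    calc N % p + p * (a : ℕ) ≤ p * (r ^ 4 : ℕ) :=
          (emod_add_mul_lt hp' (Int.ofNat_lt.2 a.isLt) N).le
      _ ≤ (2 * r ^ 2 : ℕ) * (r ^ 4 : ℕ) := by gcongr
      _ = 2 * r ^ 6 := by push_cast; ring
  refine ⟨⟨abs_toReal_star_le_toReal hd₀ (Int.natCast_nonneg _) (Int.natCast_nonneg _), ?_⟩,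
    ⟨abs_toReal_star_le_toReal hd₀ (re_nonneg _) (Int.natCast_nonneg _), ?_⟩⟩
  · calc toReal hd₀ (curvePoint p (gridPoint d r (u, v, a, b))).1
        ≤ (r ^ 2 : ℕ) + (r ^ 2 : ℕ) * (2 * r) :=
          toReal_le_add_mul hd₀ (cast_le u) (cast_le v) (by positivity) sqrt_le
      _ ≤ 3 * r ^ 3 := by
          have : (r : ℝ) ^ 2 ≤ r ^ 3 := pow_le_pow_right₀ one_le_r (by norm_num)
          push_cast
          linarith
  · calc toReal hd₀ (curvePoint p (gridPoint d r (u, v, a, b))).2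
        ≤ (2 * r ^ 6 : ℕ) + (r ^ 5 : ℕ) * (2 * r) :=
          toReal_le_add_mul hd₀ (by exact_mod_cast re_le _) (cast_le b) (by positivity) sqrt_le
      _ ≤ (3 * r ^ 3) ^ 2 := by
          have : (0 : ℝ) ≤ r ^ 6 := by positivity
          push_cast
          linarith

theorem tangentGap_curvePoint_gridPoint_ne_zero {p r : ℕ} [hp : Fact p.Prime]
    (hd : legendreSym p d = -1) (hrp : r ^ 2 ≤ p) {i j} (hij : i ≠ j) :
    tangentGap (curvePoint p (gridPoint d r i)) (curvePoint p (gridPoint d r j)) ≠ 0 := by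
  have abs_sub_lt (s t : Fin (r ^ 2)) : |((t : ℕ) : ℤ) - (s : ℕ)| < p := by
    have := s.isLt
    have := t.isLt
    rw [abs_lt]
    constructor <;> lia
  exact tangentGap_ne_zero hd (curvePoint_mem_hermitianCurve p _)
    (curvePoint_mem_hermitianCurve p _) (abs_sub_lt _ _) (abs_sub_lt _ _)
    (((curvePoint_injective hp.out.ne_zero).comp (gridPoint_injective d r)).ne hij)

end CurvePoint

theorem exists_legendreSym_eq_neg_one {p : ℕ} [Fact p.Prime] (hp : p ≠ 2) :
    ∃ d : ℤ, 0 ≤ d ∧ d < p ∧ legendreSym p d = -1 := by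
  obtain ⟨a, ha⟩ := FiniteField.exists_nonsquare (F := ZMod p) (by rwa [ZMod.ringChar_zmod_n])
  refine ⟨a.val, Int.natCast_nonneg _, Int.ofNat_lt.2 a.val_lt, ?_⟩
  rwa [legendreSym.eq_neg_one_iff, Int.cast_natCast, ZMod.natCast_zmod_val]

theorem ne_mul_self_of_legendreSym_eq_neg_one {p : ℕ} [Fact p.Prime] {d : ℤ}
    (hd : legendreSym p d = -1) (n : ℤ) : d ≠ n * n := by
  rintro rfl
  exact (legendreSym.eq_neg_one_iff p).1 hd ⟨n, Int.cast_mul n n⟩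

theorem hasSeparatedLines_pow_thirteen {r : ℕ} (hr : 2 ≤ r) :
    HasSeparatedLines (Fin (r ^ 13)) (1 / (18 * (3 * (r : ℝ) ^ 3) ^ 4)) := by
  obtain ⟨p, hp, hrp, hpr⟩ := Nat.exists_prime_lt_and_le_two_mul (r ^ 2) (by positivity)
  have : Fact p.Prime := ⟨hp⟩
  have p_ne_two : p ≠ 2 := by nlinarith
  obtain ⟨d, hd₀, hdp, hd⟩ := exists_legendreSym_eq_neg_one p_ne_two
  have index : Fin (r ^ 13) ≃ Fin (r ^ 2) × Fin (r ^ 2) × Fin (r ^ 4) × Fin (r ^ 5) :=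
    Fintype.equivOfCardEq (by simp only [Fintype.card_prod, Fintype.card_fin]; ring)
  refine HasSeparatedLines.of_embedding ?_ index.toEmbedding le_rfl
  exact hasSeparatedLines_of_tangentGap_ne_zero (hd₀ := hd₀)
    (ne_mul_self_of_legendreSym_eq_neg_one hd) (by positivity)
    (curvePoint_gridPoint_mem_parabolicBox hd₀ hp.pos hpr hdp.le)
    fun _ _ hij => tangentGap_curvePoint_gridPoint_ne_zero hd hrp.le hij

theorem exists_le_pow_and_le_two_mul_rpow_inv {n k : ℕ} (hn : 2 ≤ n) (hk : k ≠ 0) :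
    ∃ r : ℕ, 2 ≤ r ∧ n ≤ r ^ k ∧ (r : ℝ) ≤ 2 * (n : ℝ) ^ (k : ℝ)⁻¹ := by
  set z : ℝ := (n : ℝ) ^ (k : ℝ)⁻¹
  have one_lt_z : 1 < z := Real.one_lt_rpow (Nat.one_lt_cast.2 hn) (by positivity)
  refine ⟨⌈z⌉₊, Nat.lt_ceil.2 (by simpa using one_lt_z), ?_, Nat.ceil_le_two_mul (by linarith)⟩
  have : z ^ k ≤ (⌈z⌉₊ : ℝ) ^ k := by
    gcongr
    exact Nat.le_ceil z
  rw [Real.rpow_inv_natCast_pow n.cast_nonneg hk] at this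
  exact_mod_cast this

/-- There exist universal constants `c > 0` and `γ > 0` such that for every
integer `n ≥ 2` there are points `p₁, …, pₙ` in the unit square `[0,1]²` and lines
`ℓ₁, …, ℓₙ` in `ℝ²` (one-dimensional affine subspaces) such that `pᵢ ∈ ℓᵢ` for every `i`,
and for all `i ≠ j` the Euclidean distance from `pᵢ` to the line `ℓⱼ` is at least
`c · n^(γ−1)`. -/
theorem stmt0 :
    ∃ c γ : ℝ, 0 < c ∧ 0 < γ ∧
      ∀ n : ℕ, 2 ≤ n →
        ∃ (p : Fin n → EuclideanSpace ℝ (Fin 2))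
          (ℓ : Fin n → AffineSubspace ℝ (EuclideanSpace ℝ (Fin 2))),
          (∀ i, Module.finrank ℝ (ℓ i).direction = 1) ∧
          (∀ i, ∀ t, p i t ∈ Set.Icc (0 : ℝ) 1) ∧
          (∀ i, p i ∈ ℓ i) ∧
          (∀ i j, i ≠ j →
            c * (n : ℝ) ^ (γ - 1) ≤ Metric.infDist (p i) (ℓ j : Set (EuclideanSpace ℝ (Fin 2)))) := by
  refine ⟨1 / (18 * 24 ^ 4), 13⁻¹, by norm_num, by norm_num, fun n hn => ?_⟩
  obtain ⟨r, hr, hnr, hrn⟩ := exists_le_pow_and_le_two_mul_rpow_inv hn (k := 13) (by norm_num)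
  refine (hasSeparatedLines_pow_thirteen hr).of_embedding (Fin.castLEEmb hnr) ?_
  have n_pos : (0 : ℝ) < n := by positivity
  push_cast at hrn
  set z : ℝ := (n : ℝ) ^ (13 : ℝ)⁻¹ with hz
  have z_pos : 0 < z := by positivity
  have z_pow : z ^ 13 = n := by
    exact_mod_cast Real.rpow_inv_natCast_pow n_pos.le (n := 13) (by norm_num)
  calc 1 / (18 * 24 ^ 4) * (n : ℝ) ^ ((13 : ℝ)⁻¹ - 1)
      = 1 / (18 * (3 * (2 * z) ^ 3) ^ 4) := by
        rw [Real.rpow_sub_one n_pos.ne', ← hz, ← z_pow]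
        field_simp
        norm_num
    _ ≤ 1 / (18 * (3 * (r : ℝ) ^ 3) ^ 4) := by gcongr
end

section
/- There exist constants γ > 0 and c > 0 such that for every δ ∈ (0,1) there is a finite set X ⊆ Ω with |X| ≥ c · δ^(−1−γ) such that d(ω, ω') ≥ δ for all distinct ω, ω' ∈ X. -/
/-- The configuration space `Ω = [−1,1]² × [−1,1]`, with an element `(x, y, θ)`
corresponding to the point `(x, y)` together with the line through `(x, y)` of slope `θ`. -/
def Omega : Set (ℝ × ℝ × ℝ) :=
  Set.Icc (-1) 1 ×ˢ Set.Icc (-1) 1 ×ˢ Set.Icc (-1) 1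

/-- The vertical distance `d(ω, ω') = |y − y' − θ'(x − x')|`. -/
def vdist (ω ω' : ℝ × ℝ × ℝ) : ℝ :=
  |ω.2.1 - ω'.2.1 - ω'.2.2 * (ω.1 - ω'.1)|

/-!
A set of integer flags whose pairwise offsets `y - y' - θ' (x - x')` are nonzero modulo `n` can be
amplified digit by digit. Write `x`, `θ` in base `n` and `y` in base `n²`, and put a flag `s` of a
fixed set `S` in the lowest digits, with a free digit `j` for `y` at scale `n`. Two such flags with
different `s` are separated already modulo `n`; those with the same `s` have offset
`n (j - j') + n² · offset`, so either the digits `j` differ modulo `n` or one recurses, because the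
shear `n θ x` added to `y` cancels the cross term. If `S` is separated modulo `n`, then `k` digits
give `(n |S|) ^ k` flags separated modulo `n ^ (2 k)`, and rescaling turns this into separation
`δ = n ^ (-2 k)` in `Ω`. This beats the exponent one as soon as `|S| > n`, and modulo `4` there is
such an `S` with eight elements.
-/

open Function

theorem card_image_of_pairwise {α β : Type*} [DecidableEq β] {r : β → β → Prop}
    (hr : ∀ b, ¬ r b b) {f : α → β} {s : Finset α} (h : (s : Set α).Pairwise (r on f)) :
    (s.image f).card = s.card := by
  refine Finset.card_image_of_injOn (Set.injOn_iff_pairwise_ne.2 (h.mono' ?_))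
  intro a b hab heq
  exact hr (f b) (by simpa only [onFun, heq] using hab)

section Offset

variable {R : Type*} [CommRing R]

/-- The signed vertical distance of flags `(x, y, θ)` over a commutative ring, whose absolute value
over `ℝ` is `vdist`. -/
def offset (a b : R × R × R) : R :=
  a.2.1 - b.2.1 - b.2.2 * (a.1 - b.1)

@[simp]
theorem offset_self (a : R × R × R) : offset a a = 0 := by
  simp only [offset, sub_self, mul_zero]

/-- The flag with lowest digit `s` and higher digits `w`: in base `n` for the position and the
slope, in base `n ^ 2` for the height, where `j` is a free digit at scale `n`. The shear
`s.2.2 * (n * w.1)` of the height makes the offset of two flags with the same `s` independent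
of `s`. -/
def prependDigit (n : R) (s : R × R × R) (j : R) (w : R × R × R) : R × R × R :=
  (s.1 + n * w.1, s.2.1 + s.2.2 * (n * w.1) + n * j + n ^ 2 * w.2.1, s.2.2 + n * w.2.2)

theorem offset_prependDigit_same (n : R) (s : R × R × R) (j j' : R) (w w' : R × R × R) :
    offset (prependDigit n s j w) (prependDigit n s j' w') =
      n * (j - j') + n ^ 2 * offset w w' := by
  simp only [offset, prependDigit]
  ring

theorem dvd_offset_prependDigit_iff (n : R) (s s' : R × R × R) (j j' : R) (w w' : R × R × R) :
    n ∣ offset (prependDigit n s j w) (prependDigit n s' j' w') ↔ n ∣ offset s s' := by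
  refine dvd_iff_dvd_of_dvd_sub ⟨s.2.2 * w.1 - s'.2.2 * w'.1 + (j - j') + n * (w.2.1 - w'.2.1)
    - w'.2.2 * (s.1 + n * w.1 - (s'.1 + n * w'.1)) - s'.2.2 * (w.1 - w'.1), ?_⟩
  simp only [offset, prependDigit]
  ring

theorem not_dvd_offset_prependDigit [NoZeroDivisors R] {n m : R} (hn : n ≠ 0)
    {s s' : R × R × R} {j j' : R} {w w' : R × R × R}
    (hs : s ≠ s' → ¬ n ∣ offset s s') (hj : j ≠ j' → ¬ n ∣ j - j')
    (hw : w ≠ w' → ¬ m ∣ offset w w') (hne : (s, j, w) ≠ (s', j', w')) :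
    ¬ n ^ 2 * m ∣ offset (prependDigit n s j w) (prependDigit n s' j' w') := by
  intro hdvd
  obtain rfl : s = s' := by
    by_contra hss
    refine hs hss ((dvd_offset_prependDigit_iff n s s' j j' w w').1 (dvd_trans ?_ hdvd))
    exact (dvd_pow_self n two_ne_zero).mul_right m
  rw [offset_prependDigit_same] at hdvd
  obtain rfl : j = j' := by
    by_contra hjj
    refine hj hjj ((mul_dvd_mul_iff_left hn).1 ?_)
    rw [← sq]
    exact (dvd_add_left (dvd_mul_right _ _)).1 ((dvd_mul_right _ m).trans hdvd)
  rw [sub_self, mul_zero, zero_add, mul_dvd_mul_iff_left (pow_ne_zero 2 hn)] at hdvd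
  exact hw (fun hww ↦ hne (by rw [hww])) hdvd

end Offset

/-- A finite set of integer flags with positions and slopes in `[0, N)` and with pairwise offsets
not divisible by `m`. Heights are unrestricted since they only matter modulo `m`. -/
structure IsSeparatedGrid (N m : ℕ) (X : Finset (ℤ × ℤ × ℤ)) : Prop where
  position_mem : ∀ a ∈ X, a.1 ∈ Set.Ico 0 (N : ℤ)
  slope_mem : ∀ a ∈ X, a.2.2 ∈ Set.Ico 0 (N : ℤ)
  pairwise : (X : Set (ℤ × ℤ × ℤ)).Pairwise fun a b ↦ ¬ (m : ℤ) ∣ offset a b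

section PrependDigits

variable {n N m : ℕ} {S X : Finset (ℤ × ℤ × ℤ)}

/-- All flags obtained by prepending a digit from `S` to a flag of `X`. -/
noncomputable def prependDigits (n : ℕ) (S X : Finset (ℤ × ℤ × ℤ)) : Finset (ℤ × ℤ × ℤ) :=
  (S ×ˢ Finset.Ico (0 : ℤ) n ×ˢ X).image fun q ↦ prependDigit (n : ℤ) q.1 q.2.1 q.2.2

theorem add_mul_mem_Ico {a b : ℤ} (ha : a ∈ Set.Ico 0 (n : ℤ))
    (hb : b ∈ Set.Ico 0 (N : ℤ)) : a + n * b ∈ Set.Ico 0 ((n * N : ℕ) : ℤ) := by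
  obtain ⟨ha₀, ha₁⟩ := ha
  obtain ⟨hb₀, hb₁⟩ := hb
  refine ⟨by positivity, ?_⟩
  calc a + n * b < n + n * b := by gcongr
    _ = n * (b + 1) := by ring
    _ ≤ n * N := by gcongr; exact hb₁
    _ = ((n * N : ℕ) : ℤ) := by push_cast; rfl

theorem IsSeparatedGrid.pairwise_prependDigit (hn : n ≠ 0) (hS : IsSeparatedGrid n n S)
    (hX : IsSeparatedGrid N m X) :
    (↑(S ×ˢ Finset.Ico (0 : ℤ) n ×ˢ X) : Set ((ℤ × ℤ × ℤ) × ℤ × ℤ × ℤ × ℤ)).Pairwise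
      ((fun a b ↦ ¬ ((n ^ 2 * m : ℕ) : ℤ) ∣ offset a b) on
        fun q ↦ prependDigit (n : ℤ) q.1 q.2.1 q.2.2) := by
  rintro ⟨s, j, w⟩ hq ⟨s', j', w'⟩ hq' hne
  simp only [Finset.coe_product, Set.mem_prod, Finset.mem_coe, Finset.mem_Ico] at hq hq'
  have hj : j ≠ j' → ¬ (n : ℤ) ∣ j - j' := fun hjj hdvd ↦
    hjj (sub_eq_zero.1 (Int.eq_zero_of_abs_lt_dvd hdvd (abs_sub_lt_of_nonneg_of_lt
      hq.2.1.1 hq.2.1.2 hq'.2.1.1 hq'.2.1.2)))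
  simp only [onFun, Nat.cast_mul, Nat.cast_pow]
  exact not_dvd_offset_prependDigit (Nat.cast_ne_zero.2 hn) (hS.pairwise hq.1 hq'.1) hj
    (hX.pairwise hq.2.2 hq'.2.2) hne

theorem IsSeparatedGrid.card_prependDigits (hn : n ≠ 0) (hS : IsSeparatedGrid n n S)
    (hX : IsSeparatedGrid N m X) :
    (prependDigits n S X).card = n * S.card * X.card := by
  rw [prependDigits, card_image_of_pairwise (by simp) (hS.pairwise_prependDigit hn hX),
    Finset.card_product, Finset.card_product, Int.card_Ico, sub_zero, Int.toNat_natCast]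
  ring

theorem isSeparatedGrid_prependDigits (hn : n ≠ 0) (hS : IsSeparatedGrid n n S)
    (hX : IsSeparatedGrid N m X) :
    IsSeparatedGrid (n * N) (n ^ 2 * m) (prependDigits n S X) where
  position_mem := by
    simp only [prependDigits, Finset.forall_mem_image, Finset.mem_product]
    exact fun q hq ↦ add_mul_mem_Ico (hS.position_mem _ hq.1) (hX.position_mem _ hq.2.2)
  slope_mem := by
    simp only [prependDigits, Finset.forall_mem_image, Finset.mem_product]
    exact fun q hq ↦ add_mul_mem_Ico (hS.slope_mem _ hq.1) (hX.slope_mem _ hq.2.2)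
  pairwise := by
    rw [prependDigits, Finset.coe_image]
    exact (hS.pairwise_prependDigit hn hX).image

theorem isSeparatedGrid_singleton_zero (m : ℕ) : IsSeparatedGrid 1 m {0} := by
  constructor <;> simp

theorem IsSeparatedGrid.exists_pow (hn : n ≠ 0) (hS : IsSeparatedGrid n n S) (k : ℕ) :
    ∃ X, IsSeparatedGrid (n ^ k) ((n ^ k) ^ 2) X ∧ X.card = (n * S.card) ^ k := by
  induction k with
  | zero => exact ⟨{0}, isSeparatedGrid_singleton_zero _, by simp⟩
  | succ k ih =>
    obtain ⟨X, hX, hcard⟩ := ih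
    refine ⟨prependDigits n S X, ?_, ?_⟩
    · rw [pow_succ', mul_pow]
      exact isSeparatedGrid_prependDigits hn hS hX
    · rw [hS.card_prependDigits hn hX, hcard, pow_succ']

end PrependDigits

theorem vdist_eq_abs_offset (ω ω' : ℝ × ℝ × ℝ) : vdist ω ω' = |offset ω ω'| :=
  rfl

/-- The embedding of integer flags into `Ω` by the anisotropic dilation with factors `N⁻¹`, `N⁻²`,
`N⁻¹`, which scales offsets by `N⁻²`. Heights are reduced modulo one. -/
noncomputable def rescale (N : ℕ) (a : ℤ × ℤ × ℤ) : ℝ × ℝ × ℝ :=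
  (a.1 / N, Int.fract ((a.2.1 : ℝ) / N ^ 2), a.2.2 / N)

theorem intCast_div_mem_Icc {N : ℕ} {z : ℤ} (hz : z ∈ Set.Ico 0 (N : ℤ)) :
    (z : ℝ) / N ∈ Set.Icc (-1 : ℝ) 1 := by
  have hz₀ : (0 : ℝ) ≤ z := by exact_mod_cast hz.1
  have hz₁ : (z : ℝ) ≤ N := by exact_mod_cast hz.2.le
  exact ⟨neg_one_lt_zero.le.trans (by positivity), div_le_one_of_le₀ hz₁ N.cast_nonneg⟩

theorem rescale_mem_Omega {N : ℕ} {a : ℤ × ℤ × ℤ} (hx : a.1 ∈ Set.Ico 0 (N : ℤ))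
    (hθ : a.2.2 ∈ Set.Ico 0 (N : ℤ)) : rescale N a ∈ Omega :=
  ⟨intCast_div_mem_Icc hx,
    ⟨neg_one_lt_zero.le.trans (Int.fract_nonneg _), (Int.fract_lt_one _).le⟩,
    intCast_div_mem_Icc hθ⟩

theorem exists_offset_rescale_eq {N : ℕ} (hN : N ≠ 0) (a b : ℤ × ℤ × ℤ) :
    ∃ z : ℤ, offset (rescale N a) (rescale N b) = ((offset a b - N ^ 2 * z : ℤ) : ℝ) / N ^ 2 := by
  refine ⟨⌊(a.2.1 : ℝ) / N ^ 2⌋ - ⌊(b.2.1 : ℝ) / N ^ 2⌋, ?_⟩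
  simp only [offset, rescale, Int.fract]
  push_cast
  field_simp
  ring

theorem inv_sq_le_vdist_rescale {N : ℕ} (hN : N ≠ 0) {a b : ℤ × ℤ × ℤ}
    (hab : ¬ ((N ^ 2 : ℕ) : ℤ) ∣ offset a b) :
    ((N : ℝ) ^ 2)⁻¹ ≤ vdist (rescale N a) (rescale N b) := by
  obtain ⟨z, hz⟩ := exists_offset_rescale_eq hN a b
  have hne : offset a b - N ^ 2 * z ≠ 0 := fun h ↦
    hab ⟨z, by push_cast; exact sub_eq_zero.1 h⟩
  have hone : (1 : ℝ) ≤ |((offset a b - N ^ 2 * z : ℤ) : ℝ)| := by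
    exact_mod_cast Int.one_le_abs hne
  calc ((N : ℝ) ^ 2)⁻¹ = 1 / N ^ 2 := (one_div _).symm
    _ ≤ |((offset a b - N ^ 2 * z : ℤ) : ℝ)| / N ^ 2 := by gcongr
    _ = vdist (rescale N a) (rescale N b) := by
      rw [vdist_eq_abs_offset, hz, abs_div, abs_of_nonneg (by positivity : (0 : ℝ) ≤ N ^ 2)]

theorem IsSeparatedGrid.exists_subset_Omega {N : ℕ} (hN : N ≠ 0) {X : Finset (ℤ × ℤ × ℤ)}
    (hX : IsSeparatedGrid N (N ^ 2) X) :
    ∃ Y : Finset (ℝ × ℝ × ℝ), ↑Y ⊆ Omega ∧ Y.card = X.card ∧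
      (Y : Set (ℝ × ℝ × ℝ)).Pairwise fun ω ω' ↦ ((N : ℝ) ^ 2)⁻¹ ≤ vdist ω ω' := by
  have hsep : (X : Set (ℤ × ℤ × ℤ)).Pairwise
      ((fun ω ω' ↦ ((N : ℝ) ^ 2)⁻¹ ≤ vdist ω ω') on rescale N) :=
    hX.pairwise.mono' fun _ _ ↦ inv_sq_le_vdist_rescale hN
  have hirrefl (ω : ℝ × ℝ × ℝ) : ¬ ((N : ℝ) ^ 2)⁻¹ ≤ vdist ω ω := by
    rw [vdist_eq_abs_offset, offset_self, abs_zero, not_le]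
    positivity
  refine ⟨X.image (rescale N), ?_, card_image_of_pairwise hirrefl hsep, ?_⟩
  · rw [Finset.coe_image, Set.image_subset_iff]
    exact fun a ha ↦ rescale_mem_Omega (hX.position_mem a ha) (hX.slope_mem a ha)
  · rw [Finset.coe_image]
    exact hsep.image

theorem rpow_neg_le_pow_of_inv_pow_le {q K γ δ : ℝ} (hq : 0 < q) (hγ : -1 ≤ γ)
    (hK : q ^ (1 + γ) ≤ K) {k : ℕ} (hδ : q⁻¹ ^ k ≤ δ) : δ ^ (-1 - γ) ≤ K ^ k :=
  calc δ ^ (-1 - γ) ≤ (q⁻¹ ^ k) ^ (-1 - γ) :=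
        Real.rpow_le_rpow_of_nonpos (by positivity) hδ (by linarith)
    _ = (q ^ k) ^ (1 + γ) := by
        rw [inv_pow, Real.inv_rpow (by positivity), ← Real.rpow_neg (by positivity)]
        ring_nf
    _ = (q ^ (1 + γ)) ^ k := by
        rw [← Real.rpow_natCast_mul hq.le, ← Real.rpow_mul_natCast hq.le, mul_comm]
    _ ≤ K ^ k := by gcongr

theorem IsSeparatedGrid.exists_le_vdist {n : ℕ} {S : Finset (ℤ × ℤ × ℤ)} {γ δ : ℝ} (hn : 1 < n)
    (hS : IsSeparatedGrid n n S) (hγ : -1 ≤ γ) (hcard : ((n : ℝ) ^ 2) ^ (1 + γ) ≤ n * S.card)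
    (hδ₀ : 0 < δ) (hδ₁ : δ ≤ 1) :
    ∃ X : Finset (ℝ × ℝ × ℝ), ↑X ⊆ Omega ∧ (n * S.card : ℝ)⁻¹ * δ ^ (-1 - γ) ≤ X.card ∧
      ∀ ω ∈ X, ∀ ω' ∈ X, ω ≠ ω' → δ ≤ vdist ω ω' := by
  have hn₀ : n ≠ 0 := by lia
  have hq : 1 < (n : ℝ) ^ 2 := one_lt_pow₀ (by exact_mod_cast hn) two_ne_zero
  have hK : 0 < (n * S.card : ℝ) := (by positivity : 0 < ((n : ℝ) ^ 2) ^ (1 + γ)).trans_le hcard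
  obtain ⟨k, hlt, hle⟩ := exists_nat_pow_near_of_lt_one hδ₀ hδ₁ (by positivity)
    (inv_lt_one_of_one_lt₀ hq)
  obtain ⟨G, hG, hGcard⟩ := hS.exists_pow hn₀ k
  obtain ⟨X, hXΩ, hXcard, hX⟩ := hG.exists_subset_Omega (pow_ne_zero k hn₀)
  refine ⟨X, hXΩ, ?_, fun ω hω ω' hω' hne ↦ le_trans ?_ (hX hω hω' hne)⟩
  · rw [inv_mul_le_iff₀ hK, hXcard, hGcard]
    push_cast
    rw [← pow_succ']
    exact rpow_neg_le_pow_of_inv_pow_le (by positivity) hγ hcard hlt.le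
  · calc δ ≤ ((n : ℝ) ^ 2)⁻¹ ^ k := hle
      _ = (((n ^ k : ℕ) : ℝ) ^ 2)⁻¹ := by push_cast; rw [inv_pow, pow_right_comm]

/-- Eight flags with pairwise offsets nonzero modulo `4`, the base of the digit construction. -/
def eightFlags : Finset (ℤ × ℤ × ℤ) :=
  {(0, 0, 0), (0, 1, 0), (2, 2, 2), (2, 3, 2), (1, 3, 1), (1, 2, 3), (3, 2, 1), (3, 3, 3)}

theorem isSeparatedGrid_eightFlags : IsSeparatedGrid 4 4 eightFlags where
  position_mem := by decide
  slope_mem := by decide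
  pairwise := by
    have hsep : ∀ a ∈ eightFlags, ∀ b ∈ eightFlags, a ≠ b → ¬ (4 : ℤ) ∣ offset a b := by
      unfold offset
      decide
    exact fun a ha b hb ↦ hsep a ha b hb

theorem card_eightFlags : eightFlags.card = 8 := by
  decide

/-- There exist constants `γ > 0` and `c > 0` such that for every `δ ∈ (0,1)`
there is a finite set `X ⊆ Ω` with `|X| ≥ c · δ^(−1−γ)` such that `d(ω, ω') ≥ δ`
for all distinct `ω, ω' ∈ X`. -/
theorem stmt1 :
    ∃ γ c : ℝ, 0 < γ ∧ 0 < c ∧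
      ∀ δ : ℝ, 0 < δ → δ < 1 →
        ∃ X : Finset (ℝ × ℝ × ℝ),
          ↑X ⊆ Omega ∧
          c * δ ^ (-1 - γ) ≤ (X.card : ℝ) ∧
          (∀ ω ∈ X, ∀ ω' ∈ X, ω ≠ ω' → δ ≤ vdist ω ω') := by
  have hcard : (((4 : ℕ) : ℝ) ^ 2) ^ (1 + 1 / 4 : ℝ) ≤ (4 : ℕ) * eightFlags.card := by
    rw [card_eightFlags, show ((4 : ℕ) : ℝ) ^ 2 = 2 ^ (4 : ℝ) by norm_num,
      ← Real.rpow_mul zero_le_two]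
    norm_num
  refine ⟨1 / 4, ((4 : ℕ) * eightFlags.card : ℝ)⁻¹, by norm_num,
    by rw [card_eightFlags]; norm_num, fun δ hδ₀ hδ₁ ↦ ?_⟩
  exact isSeparatedGrid_eightFlags.exists_le_vdist (by norm_num) (by norm_num) hcard hδ₀ hδ₁.le
end

section
/- There exists a constant c₁ > 0 such that for every δ ∈ (0,1) there is a finite set X ⊆ Ω with |X| ≥ c₁ · δ^(−1) · log(1/δ) such that d(ω, ω') ≥ δ for all distinct ω, ω' ∈ X. -/
/-!
Attach to `(u, v)` the point of abscissa `u` on the vertical translate `y = x² - x + v` of a fixed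
parabola, together with its tangent line. The vertical distance between two such flags is
`|v - v' + (u - u')²|`, so on the grid `u ∈ M⁻¹ℤ`, `v ∈ M⁻²ℤ` it is at least `M⁻²` unless it
vanishes. It remains to find many integer points `(a, b)` in `[0, M) × [0, M²)` no two of which
satisfy `b' - b = (a' - a)²`. As in Ruzsa's construction of sets without square differences, write
`a` and `b` in base `m`, where `m` is squarefree, and let the even-position digits of `b` range
over a set `R` of residues modulo `m` whose nonzero differences are not squares: comparing lowest
digits shows that two points satisfying the relation agree digit by digit. With `M = mᵏ` and
`δ = M⁻²` this gives `(m² |R|)ᵏ = δ⁻¹ |R|ᵏ` points, a power gain over `δ⁻¹` as soon as `2 ≤ |R|`;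
take `m = 5` and `R = {0, 2}`.
-/

open Finset Real

/-- The incident point-line pair over `u` on the translate `y = x² - x + v`: the point of abscissa
`u` with the tangent line there. This parabola keeps the slopes over `[0, 1]` inside `[-1, 1]`. -/
def parabolaFlag (u v : ℝ) : ℝ × ℝ × ℝ :=
  (u, u ^ 2 - u + v, 2 * u - 1)

theorem parabolaFlag_mem_Omega {u v : ℝ} (hu : u ∈ Set.Icc 0 1) (hv : v ∈ Set.Icc 0 1) :
    parabolaFlag u v ∈ Omega := by
  obtain ⟨hu₀, hu₁⟩ := hu
  obtain ⟨hv₀, hv₁⟩ := hv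
  refine ⟨⟨?_, ?_⟩, ⟨?_, ?_⟩, ?_, ?_⟩ <;> simp only [parabolaFlag] <;> nlinarith

theorem vdist_parabolaFlag (u v u' v' : ℝ) :
    vdist (parabolaFlag u v) (parabolaFlag u' v') = |v + (u - u') ^ 2 - v'| := by
  simp only [vdist, parabolaFlag]
  ring_nf

theorem vdist_self (ω : ℝ × ℝ × ℝ) : vdist ω ω = 0 := by
  simp [vdist]

/-- A set of points of the plane over `A` is parabola-free if no point of it lies on the unit
upward parabola whose vertex is another one of its points. -/
def IsParabolaFree {A : Type*} [Ring A] (S : Set (A × A)) : Prop :=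
  ∀ p ∈ S, ∀ q ∈ S, p.2 + (p.1 - q.1) ^ 2 = q.2 → p = q

/-- The flags of the integer points `p`, rescaled parabolically from `[0, M] × [0, M²]` to the unit
square. -/
noncomputable def scaledFlag (M : ℝ) (p : ℤ × ℤ) : ℝ × ℝ × ℝ :=
  parabolaFlag (p.1 / M) (p.2 / M ^ 2)

theorem scaledFlag_mem_Omega {M : ℕ} {p : ℤ × ℤ} (h₁ : p.1 ∈ Set.Ico 0 (M : ℤ))
    (h₂ : p.2 ∈ Set.Ico 0 ((M : ℤ) ^ 2)) : scaledFlag M p ∈ Omega := by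
  have div_mem {x y : ℝ} (hx : 0 ≤ x) (hxy : x ≤ y) : x / y ∈ Set.Icc 0 1 :=
    ⟨div_nonneg hx (hx.trans hxy), div_le_one_of_le₀ hxy (hx.trans hxy)⟩
  refine parabolaFlag_mem_Omega (div_mem ?_ ?_) (div_mem ?_ ?_)
  · exact_mod_cast h₁.1
  · exact_mod_cast h₁.2.le
  · exact_mod_cast h₂.1
  · exact_mod_cast h₂.2.le

theorem vdist_scaledFlag (M : ℝ) (p q : ℤ × ℤ) :
    vdist (scaledFlag M p) (scaledFlag M q) =
      |((p.2 + (p.1 - q.1) ^ 2 - q.2 : ℤ) : ℝ)| / M ^ 2 := by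
  have hquot : (p.2 / M ^ 2 + (p.1 / M - q.1 / M) ^ 2 - q.2 / M ^ 2 : ℝ) =
      ((p.2 + (p.1 - q.1) ^ 2 - q.2 : ℤ) : ℝ) / M ^ 2 := by
    push_cast
    ring
  rw [scaledFlag, scaledFlag, vdist_parabolaFlag, hquot, abs_div, abs_sq]

theorem IsParabolaFree.inv_sq_le_vdist_scaledFlag {S : Set (ℤ × ℤ)} (hS : IsParabolaFree S) (M : ℝ)
    {p q : ℤ × ℤ} (hp : p ∈ S) (hq : q ∈ S) (hpq : p ≠ q) :
    (M ^ 2)⁻¹ ≤ vdist (scaledFlag M p) (scaledFlag M q) := by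
  have hne : p.2 + (p.1 - q.1) ^ 2 - q.2 ≠ 0 := fun h ↦ hpq (hS p hp q hq (sub_eq_zero.1 h))
  have hone : (1 : ℝ) ≤ |((p.2 + (p.1 - q.1) ^ 2 - q.2 : ℤ) : ℝ)| := by
    exact_mod_cast Int.one_le_abs hne
  rw [vdist_scaledFlag, inv_eq_one_div]
  gcongr

theorem IsParabolaFree.injOn_scaledFlag {S : Set (ℤ × ℤ)} (hS : IsParabolaFree S) {M : ℝ}
    (hM : M ≠ 0) : Set.InjOn (scaledFlag M) S := by
  intro p hp q hq hpq
  by_contra hne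
  have hle := hS.inv_sq_le_vdist_scaledFlag M hp hq hne
  rw [hpq, vdist_self] at hle
  exact hle.not_gt (by positivity)

theorem IsParabolaFree.exists_separated {S : Finset (ℤ × ℤ)} (hS : IsParabolaFree (S : Set (ℤ × ℤ)))
    {M : ℕ} (hM : M ≠ 0)
    (hbox : ∀ p ∈ S, p.1 ∈ Set.Ico 0 (M : ℤ) ∧ p.2 ∈ Set.Ico 0 ((M : ℤ) ^ 2)) :
    ∃ X : Finset (ℝ × ℝ × ℝ), ↑X ⊆ Omega ∧ #X = #S ∧
      (X : Set (ℝ × ℝ × ℝ)).Pairwise fun ω ω' ↦ ((M : ℝ) ^ 2)⁻¹ ≤ vdist ω ω' := by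
  refine ⟨S.image (scaledFlag M), ?_,
    card_image_of_injOn (hS.injOn_scaledFlag (Nat.cast_ne_zero.2 hM)), ?_⟩
  · rw [coe_image, Set.image_subset_iff]
    exact fun p hp ↦ scaledFlag_mem_Omega (hbox p hp).1 (hbox p hp).2
  · rw [coe_image]
    rintro _ ⟨p, hp, rfl⟩ _ ⟨q, hq, rfl⟩ hne
    exact hS.inv_sq_le_vdist_scaledFlag M hp hq (ne_of_apply_ne _ hne)

/-- A subset of a ring is square-difference-free if no difference of distinct elements is a
square. -/
def IsSquareDifferenceFree {A : Type*} [Ring A] (R : Set A) : Prop :=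
  ∀ r ∈ R, ∀ s ∈ R, IsSquare (s - r) → r = s

section Digits

variable {m : ℕ}

/-- Appends to `(a, b)` low-order base-`m` digits, represented by residues: the digit `d.1` to `a`
and the two digits `d.2.1`, `d.2.2` (the latter in the units place) to `b`. -/
def appendDigits (p : ℤ × ℤ) (d : ZMod m × ZMod m × ZMod m) : ℤ × ℤ :=
  (m * p.1 + d.1.val, m ^ 2 * p.2 + m * d.2.1.val + d.2.2.val)

theorem appendDigits_fst_mem_Ico [NeZero m] {p : ℤ × ℤ} {N : ℤ} (hp : p.1 ∈ Set.Ico 0 N)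
    (d : ZMod m × ZMod m × ZMod m) : (appendDigits p d).1 ∈ Set.Ico 0 (N * m) := by
  have hα : (d.1.val : ℤ) < m := mod_cast d.1.val_lt
  obtain ⟨hp₀, hpN⟩ := hp
  simp only [appendDigits]
  exact ⟨by positivity, by nlinarith⟩

theorem appendDigits_snd_mem_Ico [NeZero m] {p : ℤ × ℤ} {N : ℤ} (hp : p.2 ∈ Set.Ico 0 N)
    (d : ZMod m × ZMod m × ZMod m) : (appendDigits p d).2 ∈ Set.Ico 0 (N * m ^ 2) := by
  have hγ : (d.2.1.val : ℤ) + 1 ≤ m := mod_cast d.2.1.val_lt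
  have hρ : (d.2.2.val : ℤ) < m := mod_cast d.2.2.val_lt
  obtain ⟨hp₀, hpN⟩ := hp
  simp only [appendDigits]
  refine ⟨by positivity, ?_⟩
  calc (m : ℤ) ^ 2 * p.2 + m * d.2.1.val + d.2.2.val
      < m ^ 2 * p.2 + m * (d.2.1.val + 1) := by linarith
    _ ≤ m ^ 2 * p.2 + m * m := by gcongr
    _ = m ^ 2 * (p.2 + 1) := by ring
    _ ≤ m ^ 2 * N := by gcongr; exact hpN
    _ = N * m ^ 2 := mul_comm _ _

theorem eq_of_appendDigits_parabola (hm : Squarefree m) {R : Set (ZMod m)}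
    (hR : IsSquareDifferenceFree R) {p q : ℤ × ℤ} {d e : ZMod m × ZMod m × ZMod m}
    (hd : d.2.2 ∈ R) (he : e.2.2 ∈ R)
    (h : (appendDigits p d).2 + ((appendDigits p d).1 - (appendDigits q e).1) ^ 2 =
      (appendDigits q e).2) :
    d = e ∧ p.2 + (p.1 - q.1) ^ 2 = q.2 := by
  obtain ⟨a, b⟩ := p
  obtain ⟨a', b'⟩ := q
  obtain ⟨α, γ, ρ⟩ := d
  obtain ⟨α', γ', ρ'⟩ := e
  have : NeZero m := ⟨hm.ne_zero⟩
  have hm₀ : (m : ℤ) ≠ 0 := mod_cast hm.ne_zero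
  simp only [appendDigits] at h hd he ⊢
  have hmod : ρ + (α - α') ^ 2 = ρ' := by simpa using congrArg (Int.cast : ℤ → ZMod m) h
  obtain rfl : ρ = ρ' := hR ρ hd ρ' he ⟨α - α', by rw [← hmod]; ring⟩
  obtain rfl : α = α' := by
    have : IsReduced (ZMod m) := isReduced_zmod.2 (.inl hm)
    exact sub_eq_zero.1 (pow_eq_zero_iff two_ne_zero |>.1 (add_eq_left.1 hmod))
  have hdiv : (m : ℤ) * b + γ.val + m * (a - a') ^ 2 = m * b' + γ'.val :=
    mul_left_cancel₀ hm₀ (by linear_combination h)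
  obtain rfl : γ = γ' := by simpa using congrArg (Int.cast : ℤ → ZMod m) hdiv
  exact ⟨rfl, mul_left_cancel₀ hm₀ (by linear_combination hdiv)⟩

variable [NeZero m] (R : Finset (ZMod m))

/-- The integer points `(a, b)` with `k` base-`m` digits in `a` and `2k` in `b`, the digits of `b`
at even positions (from the units place, numbered `0`) being restricted to `R`. -/
def digitSet : ℕ → Finset (ℤ × ℤ)
  | 0 => {0}
  | k + 1 => (digitSet k ×ˢ univ ×ˢ univ ×ˢ R).image fun x ↦ appendDigits x.1 x.2

theorem mem_Ico_of_mem_digitSet {k : ℕ} {p : ℤ × ℤ} (hp : p ∈ digitSet R k) :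
    p.1 ∈ Set.Ico 0 ((m ^ k : ℕ) : ℤ) ∧ p.2 ∈ Set.Ico 0 (((m ^ k : ℕ) : ℤ) ^ 2) := by
  induction k generalizing p with
  | zero => simp_all [digitSet]
  | succ k ih =>
    obtain ⟨⟨q, d⟩, hqd, rfl⟩ := mem_image.1 hp
    obtain ⟨hq₁, hq₂⟩ := ih (mem_product.1 hqd).1
    rw [pow_succ, Nat.cast_mul, mul_pow]
    exact ⟨appendDigits_fst_mem_Ico hq₁ d, appendDigits_snd_mem_Ico hq₂ d⟩

variable {R}

theorem eq_of_appendDigits_parabola_of_mem (hm : Squarefree m)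
    (hR : IsSquareDifferenceFree (R : Set (ZMod m))) {S : Finset (ℤ × ℤ)}
    (hS : IsParabolaFree (S : Set (ℤ × ℤ))) {x y : (ℤ × ℤ) × ZMod m × ZMod m × ZMod m}
    (hx : x ∈ S ×ˢ univ ×ˢ univ ×ˢ R) (hy : y ∈ S ×ˢ univ ×ˢ univ ×ˢ R)
    (h : (appendDigits x.1 x.2).2 + ((appendDigits x.1 x.2).1 - (appendDigits y.1 y.2).1) ^ 2 =
      (appendDigits y.1 y.2).2) : x = y := by
  simp only [mem_product, mem_univ, true_and] at hx hy
  obtain ⟨hdigits, hparabola⟩ := eq_of_appendDigits_parabola hm hR hx.2 hy.2 h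
  exact Prod.ext (hS _ hx.1 _ hy.1 hparabola) hdigits

theorem isParabolaFree_digitSet (hm : Squarefree m)
    (hR : IsSquareDifferenceFree (R : Set (ZMod m))) (k : ℕ) :
    IsParabolaFree (digitSet R k : Set (ℤ × ℤ)) := by
  induction k with
  | zero => simp [IsParabolaFree, digitSet]
  | succ k ih =>
    intro p hp q hq hpq
    obtain ⟨x, hx, rfl⟩ := mem_image.1 hp
    obtain ⟨y, hy, rfl⟩ := mem_image.1 hq
    rw [eq_of_appendDigits_parabola_of_mem hm hR ih hx hy hpq]

theorem card_digitSet (hm : Squarefree m) (hR : IsSquareDifferenceFree (R : Set (ZMod m)))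
    (k : ℕ) : #(digitSet R k) = (m ^ 2 * #R) ^ k := by
  induction k with
  | zero => simp [digitSet]
  | succ k ih =>
    rw [digitSet, card_image_of_injOn, card_product, card_product, card_product, card_univ,
      ZMod.card, ih]
    · ring
    · intro x hx y hy hxy
      refine eq_of_appendDigits_parabola_of_mem hm hR (isParabolaFree_digitSet hm hR k) hx hy ?_
      simp only at hxy
      simp [hxy]

theorem exists_separated_card_eq_pow (hm : Squarefree m)
    (hR : IsSquareDifferenceFree (R : Set (ZMod m))) (k : ℕ) :
    ∃ X : Finset (ℝ × ℝ × ℝ), ↑X ⊆ Omega ∧ #X = (m ^ 2 * #R) ^ k ∧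
      (X : Set (ℝ × ℝ × ℝ)).Pairwise fun ω ω' ↦ (((m : ℝ) ^ 2) ^ k)⁻¹ ≤ vdist ω ω' := by
  obtain ⟨X, hXΩ, hcard, hsep⟩ := (isParabolaFree_digitSet hm hR k).exists_separated
    (pow_ne_zero k (NeZero.ne m)) fun _ ↦ mem_Ico_of_mem_digitSet R
  rw [card_digitSet hm hR] at hcard
  rw [Nat.cast_pow, pow_right_comm] at hsep
  exact ⟨X, hXΩ, hcard, hsep⟩

end Digits

theorem pow_rpow_one_add_logb {N r : ℝ} (hN₀ : 0 < N) (hN₁ : N ≠ 1) (hr : 0 < r) (k : ℕ) :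
    (N ^ k) ^ (1 + logb N r) = (N * r) ^ k := by
  rw [← rpow_pow_comm hN₀.le, rpow_add hN₀, rpow_one, rpow_logb hN₀ hN₁ hr]

theorem exists_separated_card_ge_rpow {m : ℕ} (hm₁ : 1 < m) (hm : Squarefree m)
    {R : Finset (ZMod m)} (hR : IsSquareDifferenceFree (R : Set (ZMod m))) (hR₀ : R.Nonempty) :
    ∃ c : ℝ, 0 < c ∧ ∀ δ : ℝ, 0 < δ → δ < 1 → ∃ X : Finset (ℝ × ℝ × ℝ), ↑X ⊆ Omega ∧
      c * δ⁻¹ ^ (1 + logb (m ^ 2) #R) ≤ #X ∧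
      (X : Set (ℝ × ℝ × ℝ)).Pairwise fun ω ω' ↦ δ ≤ vdist ω ω' := by
  have : NeZero m := ⟨hm.ne_zero⟩
  have hN : (1 : ℝ) < (m : ℝ) ^ 2 := one_lt_pow₀ (mod_cast hm₁) two_ne_zero
  have hcard₁ : (1 : ℝ) ≤ #R := mod_cast hR₀.card_pos
  set N : ℝ := (m : ℝ) ^ 2
  set s : ℝ := 1 + logb N #R
  have hs : 0 ≤ s := add_nonneg zero_le_one (logb_nonneg hN hcard₁)
  refine ⟨(N ^ s)⁻¹, by positivity, fun δ hδ₀ hδ₁ ↦ ?_⟩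
  obtain ⟨k, hk, hk'⟩ := exists_nat_pow_near (one_le_inv₀ hδ₀ |>.2 hδ₁.le) hN
  obtain ⟨X, hXΩ, hcard, hsep⟩ := exists_separated_card_eq_pow hm hR k
  refine ⟨X, hXΩ, ?_, hsep.mono' fun ω ω' h ↦ (le_inv_of_le_inv₀ (by positivity) hk).trans h⟩
  calc (N ^ s)⁻¹ * δ⁻¹ ^ s
      ≤ (N ^ s)⁻¹ * (N * N ^ k) ^ s := by
        rw [pow_succ'] at hk'
        gcongr
    _ = (N ^ k) ^ s := by
        rw [mul_rpow (by positivity) (by positivity), inv_mul_cancel_left₀ (by positivity)]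
    _ = (N * #R) ^ k := pow_rpow_one_add_logb (by positivity) hN.ne' (by positivity) k
    _ = #X := by rw [hcard]; push_cast; rfl

theorem isSquareDifferenceFree_zero_two_zmod_five :
    IsSquareDifferenceFree (({0, 2} : Finset (ZMod 5)) : Set (ZMod 5)) := by
  simp only [IsSquareDifferenceFree, mem_coe]
  decide

theorem mul_inv_mul_log_le_mul_inv_rpow {c δ ε : ℝ} (hc : 0 ≤ c) (hδ : 0 < δ) (hε : 0 < ε) :
    c * ε * δ⁻¹ * log (1 / δ) ≤ c * δ⁻¹ ^ (1 + ε) := by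
  have hδ' : 0 < δ⁻¹ := inv_pos.2 hδ
  calc c * ε * δ⁻¹ * log (1 / δ) ≤ c * ε * δ⁻¹ * (δ⁻¹ ^ ε / ε) := by
        rw [one_div]
        gcongr
        exact log_le_rpow_div hδ'.le hε
    _ = c * δ⁻¹ ^ (1 + ε) := by
        rw [rpow_add hδ', rpow_one]
        field_simp

theorem stmt2_general :
    ∃ c : ℝ, 0 < c ∧
      ∀ δ : ℝ, 0 < δ → δ < 1 →
        ∃ X : Finset (ℝ × ℝ × ℝ),
          ↑X ⊆ Omega ∧
          c * δ⁻¹ ^ (1 + logb 25 2) ≤ (X.card : ℝ) ∧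
          (∀ ω ∈ X, ∀ ω' ∈ X, ω ≠ ω' → δ ≤ vdist ω ω') := by
  obtain ⟨c, hc, h⟩ := exists_separated_card_ge_rpow (by norm_num) Nat.prime_five.prime.squarefree
    isSquareDifferenceFree_zero_two_zmod_five (by simp)
  have hbase : ((5 : ℕ) : ℝ) ^ 2 = 25 := by norm_num
  have hcard : ((#({0, 2} : Finset (ZMod 5)) : ℕ) : ℝ) = 2 := by norm_cast
  rw [hbase, hcard] at h
  refine ⟨c, hc, fun δ hδ₀ hδ₁ ↦ ?_⟩
  obtain ⟨X, hXΩ, hX, hsep⟩ := h δ hδ₀ hδ₁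
  exact ⟨X, hXΩ, hX, fun ω hω ω' hω' hne ↦ hsep hω hω' hne⟩

/-- There exists a constant `c₁ > 0` such that for every `δ ∈ (0,1)` there is
a finite set `X ⊆ Ω` with `|X| ≥ c₁ · δ⁻¹ · log(1/δ)` such that `d(ω, ω') ≥ δ` for all
distinct `ω, ω' ∈ X`. -/
theorem stmt2 :
    ∃ c₁ : ℝ, 0 < c₁ ∧
      ∀ δ : ℝ, 0 < δ → δ < 1 →
        ∃ X : Finset (ℝ × ℝ × ℝ),
          ↑X ⊆ Omega ∧
          c₁ * δ⁻¹ * Real.log (1 / δ) ≤ (X.card : ℝ) ∧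
          (∀ ω ∈ X, ∀ ω' ∈ X, ω ≠ ω' → δ ≤ vdist ω ω') := by
  obtain ⟨c, hc, h⟩ := stmt2_general
  have hε : 0 < logb 25 2 := logb_pos (by norm_num) (by norm_num)
  exact ⟨c * logb 25 2, mul_pos hc hε, fun δ hδ₀ hδ₁ ↦ (h δ hδ₀ hδ₁).imp fun X hX ↦
    ⟨hX.1, (mul_inv_mul_log_le_mul_inv_rpow hc.le hδ₀ hε).trans hX.2.1, hX.2.2⟩⟩
end

section
/- For every integer n ≥ 2, any points p₁, …, pₙ ∈ [0,1]² and any lines ℓ₁, …, ℓₙ in ℝ² with pᵢ ∈ ℓᵢ for every i, there exist indices i ≠ j such that the Euclidean distance from pᵢ to the line ℓⱼ is at most √2 / ⌊√(n−1)⌋. -/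
/-!
Cut the unit cube `[0,1]^d` into `k ^ d` congruent subcubes of side `1 / k`. If there are more than
`k ^ d` points, two of them share a subcube, so they are at Euclidean distance at most `√d / k`.
For `n` points, the largest admissible `k` is `⌊(n - 1)^(1/d)⌋`. Finally, the distance from `pᵢ` to
a line through `pⱼ` is at most the distance from `pᵢ` to `pⱼ`.
-/

open Set

lemma exists_fin_mem_Icc_natCast_add_one {R : Type*} [Semiring R] [LinearOrder R]
    [IsStrictOrderedRing R] [FloorSemiring R] {k : ℕ} (hk : k ≠ 0) {x : R}
    (hx : x ∈ Icc 0 (k : R)) : ∃ m : Fin k, x ∈ Icc (m : R) (m + 1) := by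
  rcases hx.2.eq_or_lt with rfl | hlt
  · obtain ⟨m, rfl⟩ := Nat.exists_eq_succ_of_ne_zero hk
    exact ⟨Fin.last m, by simp⟩
  · exact ⟨⟨⌊x⌋₊, (Nat.floor_lt hx.1).2 hlt⟩, Nat.floor_le hx.1, (Nat.lt_floor_add_one x).le⟩

lemma exists_ne_dist_le_one_div_of_pow_card_lt {α ι : Type*} [Fintype α] [Fintype ι] {k : ℕ}
    (hk : k ≠ 0) (hcard : k ^ Fintype.card ι < Fintype.card α) {p : α → ι → ℝ}
    (hp : ∀ a i, p a i ∈ Icc (0 : ℝ) 1) : ∃ a b, a ≠ b ∧ dist (p a) (p b) ≤ 1 / k := by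
  classical
  have hk_pos : (0 : ℝ) < k := by positivity
  have hscaled (a : α) (i : ι) : (k : ℝ) * p a i ∈ Icc (0 : ℝ) k :=
    ⟨mul_nonneg hk_pos.le (hp a i).1, mul_le_of_le_one_right hk_pos.le (hp a i).2⟩
  choose cell hcell using fun a i ↦ exists_fin_mem_Icc_natCast_add_one hk (hscaled a i)
  obtain ⟨a, b, hab, hsame⟩ := Fintype.exists_ne_map_eq_of_card_lt cell (by simpa using hcard)
  refine ⟨a, b, hab, (dist_pi_le_iff (by positivity)).2 fun i ↦ ?_⟩
  have hb : (k : ℝ) * p b i ∈ Icc (cell a i : ℝ) (cell a i + 1) := hsame ▸ hcell b i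
  rw [le_div_iff₀' hk_pos]
  calc (k : ℝ) * dist (p a i) (p b i) = dist (k * p a i) (k * p b i) := by
        rw [Real.dist_eq, Real.dist_eq, ← mul_sub, abs_mul, abs_of_pos hk_pos]
    _ ≤ cell a i + 1 - cell a i := Real.dist_le_of_mem_Icc (hcell a i) hb
    _ = 1 := add_sub_cancel_left _ _

lemma euclidean_dist_le_sqrt_card_mul_dist_ofLp {ι : Type*} [Fintype ι]
    (x y : EuclideanSpace ℝ ι) : dist x y ≤ √(Fintype.card ι) * dist x.ofLp y.ofLp := by
  simpa [Real.sqrt_eq_rpow] using (PiLp.antilipschitzWith_ofLp 2 fun _ : ι ↦ ℝ).le_mul_dist x y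

lemma floor_sub_one_rpow_inv_pow_lt {n d : ℕ} (hn : n ≠ 0) (hd : d ≠ 0) :
    ⌊((n : ℝ) - 1) ^ (d : ℝ)⁻¹⌋₊ ^ d < n := by
  have hn_sub : (0 : ℝ) ≤ n - 1 := sub_nonneg.2 (mod_cast Nat.one_le_iff_ne_zero.2 hn)
  suffices (⌊((n : ℝ) - 1) ^ (d : ℝ)⁻¹⌋₊ : ℝ) ^ d < n from mod_cast this
  calc (⌊((n : ℝ) - 1) ^ (d : ℝ)⁻¹⌋₊ : ℝ) ^ d ≤ (((n : ℝ) - 1) ^ (d : ℝ)⁻¹) ^ d := by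
        gcongr
        exact Nat.floor_le (by positivity)
    _ = n - 1 := Real.rpow_inv_natCast_pow hn_sub hd
    _ < n := sub_one_lt _

theorem stmt7_general {α ι : Type*} [Fintype α] [Nontrivial α] [Fintype ι] [Nonempty ι]
    (p : α → EuclideanSpace ℝ ι) (hp : ∀ a i, p a i ∈ Icc (0 : ℝ) 1) :
    ∃ a b, a ≠ b ∧ dist (p a) (p b) ≤
      √(Fintype.card ι) / ⌊((Fintype.card α : ℝ) - 1) ^ (Fintype.card ι : ℝ)⁻¹⌋ := by
  set r : ℝ := ((Fintype.card α : ℝ) - 1) ^ (Fintype.card ι : ℝ)⁻¹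
  have hcard : (1 : ℝ) + 1 ≤ Fintype.card α := mod_cast Fintype.one_lt_card (α := α)
  have hr_one : 1 ≤ r := Real.one_le_rpow (le_sub_iff_add_le.2 hcard) (by positivity)
  have hfloor : ⌊r⌋₊ ≠ 0 := (Nat.floor_pos.2 hr_one).ne'
  have hpow : ⌊r⌋₊ ^ Fintype.card ι < Fintype.card α :=
    floor_sub_one_rpow_inv_pow_lt Fintype.card_ne_zero Fintype.card_ne_zero
  obtain ⟨a, b, hab, hdist⟩ := exists_ne_dist_le_one_div_of_pow_card_lt hfloor hpow hp
  refine ⟨a, b, hab, ?_⟩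
  calc dist (p a) (p b) ≤ √(Fintype.card ι) * dist (p a).ofLp (p b).ofLp :=
        euclidean_dist_le_sqrt_card_mul_dist_ofLp _ _
    _ ≤ √(Fintype.card ι) * (1 / ⌊r⌋₊) := by gcongr
    _ = √(Fintype.card ι) / ⌊r⌋ := by
        rw [mul_one_div, natCast_floor_eq_intCast_floor (zero_le_one.trans hr_one)]

/-- For every integer `n ≥ 2`, any points `p₁, …, pₙ ∈ [0,1]²` and any lines
`ℓ₁, …, ℓₙ` in `ℝ²` (one-dimensional affine subspaces) with `pᵢ ∈ ℓᵢ` for every `i`, there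
exist indices `i ≠ j` such that the Euclidean distance from `pᵢ` to the line `ℓⱼ` is at
most `√2 / ⌊√(n−1)⌋`. -/
theorem stmt7 (n : ℕ) (hn : 2 ≤ n) (p : Fin n → EuclideanSpace ℝ (Fin 2))
    (ℓ : Fin n → AffineSubspace ℝ (EuclideanSpace ℝ (Fin 2)))
    (hdim : ∀ i, Module.finrank ℝ (ℓ i).direction = 1)
    (hp : ∀ i, ∀ t, p i t ∈ Set.Icc (0 : ℝ) 1)
    (hmem : ∀ i, p i ∈ ℓ i) :
    ∃ i j : Fin n, i ≠ j ∧
      Metric.infDist (p i) (ℓ j : Set (EuclideanSpace ℝ (Fin 2))) ≤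
        Real.sqrt 2 / (⌊Real.sqrt ((n : ℝ) - 1)⌋ : ℝ) := by
  have : Nontrivial (Fin n) := Fin.nontrivial_iff_two_le.2 hn
  obtain ⟨i, j, hij, hdist⟩ := stmt7_general p hp
  exact ⟨i, j, hij, (Metric.infDist_le_dist_of_mem (hmem j)).trans <| by
    simpa [Real.sqrt_eq_rpow] using hdist⟩
end

section
/- For every integer n ≥ 2 and any n distinct points in [0,1]², there exist at least n/10 pairwise disjoint (unordered) pairs {pᵢ, qᵢ} of these points such that for every pair the Euclidean distance between pᵢ and qᵢ is at most 2·n^(−1/2). -/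
/-!
Write `δ = 2 / √n`. If every set of more than `k` of the points contains two at distance at most
`δ`, then removing such pairs one after another yields `m` disjoint pairs as long as
`2m + k ≤ n + 1`. An `a × b` grid of cells of diagonal at most `δ` allows `k = ab` by pigeonhole,
and suitable `a`, `b` with `m ≥ n / 10` exist for every `n ≥ 2` except `n = 4`. For `n = 4` one
needs two of four points at distance at most `1`: seen from the centre of the square, four plane
vectors of length at most `1 / √2` cannot have pairwise negative inner products, since by Radon's
theorem the convex hulls of two complementary subfamilies would share a point `u`, and then
`⟪u, u⟫ < 0`.
-/

open Finset Module
open scoped RealInnerProductSpace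

theorem exists_disjoint_pairs_of_forall_card_lt {α : Type*} {r : α → α → Prop} {k : ℕ}
    (hr : ∀ T : Finset α, k < #T → ∃ x ∈ T, ∃ y ∈ T, x ≠ y ∧ r x y)
    (m : ℕ) (S : Finset α) (hS : 2 * m + k ≤ #S + 1) :
    ∃ a b : Fin m → α, Function.Injective a ∧ Function.Injective b ∧ (∀ i j, a i ≠ b j) ∧
      ∀ i, a i ∈ S ∧ b i ∈ S ∧ r (a i) (b i) := by
  classical
  induction m generalizing S with
  | zero =>
    exact ⟨Fin.elim0, Fin.elim0, fun i ↦ i.elim0, fun i ↦ i.elim0, fun i ↦ i.elim0,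
      fun i ↦ i.elim0⟩
  | succ m ih =>
    obtain ⟨x, hx, y, hy, hxy, hrxy⟩ := hr S (by omega)
    have hcard : #((S.erase x).erase y) + 2 = #S := by
      rw [← card_erase_add_one hx, ← card_erase_add_one (mem_erase.2 ⟨hxy.symm, hy⟩)]
    obtain ⟨a, b, ha, hb, hab, hS'⟩ := ih ((S.erase x).erase y) (by omega)
    simp only [mem_erase] at hS'
    refine ⟨Fin.cons x a, Fin.cons y b, ?_, ?_, ?_, ?_⟩
    · exact Fin.cons_injective_iff.2 ⟨fun ⟨i, hi⟩ ↦ (hS' i).1.2.1 hi, ha⟩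
    · exact Fin.cons_injective_iff.2 ⟨fun ⟨i, hi⟩ ↦ (hS' i).2.1.1 hi, hb⟩
    · simp only [Fin.forall_fin_succ, Fin.cons_zero, Fin.cons_succ]
      exact ⟨⟨hxy, fun j ↦ (hS' j).2.1.2.1.symm⟩, fun i ↦ ⟨(hS' i).1.1, hab i⟩⟩
    · simp only [Fin.forall_fin_succ, Fin.cons_zero, Fin.cons_succ]
      exact ⟨⟨hx, hy, hrxy⟩, fun i ↦ ⟨(hS' i).1.2.2, (hS' i).2.1.2.2, (hS' i).2.2⟩⟩

section Grid

/-- The index of the interval of the subdivision of `[0, 1]` into `k` equal intervals that contains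
`x`. A subdivision point belongs to the interval on its left, except that truncated subtraction
puts `0` into the interval of index `0`. -/
noncomputable def subdivisionIndex (k : ℕ) (x : ℝ) : ℕ :=
  ⌈k * x⌉₊ - 1

variable {k : ℕ} {x y : ℝ}

theorem subdivisionIndex_lt (hk : 0 < k) (hx : x ≤ 1) : subdivisionIndex k x < k := by
  have hceil : ⌈k * x⌉₊ ≤ k := Nat.ceil_le.2 (mul_le_of_le_one_right k.cast_nonneg hx)
  rw [subdivisionIndex]
  omega

theorem subdivisionIndex_le_mul (hx : 0 ≤ x) : (subdivisionIndex k x : ℝ) ≤ k * x := by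
  have hkx : 0 ≤ k * x := by positivity
  have hceil := Nat.ceil_lt_add_one hkx
  rw [subdivisionIndex]
  rcases Nat.eq_zero_or_pos ⌈k * x⌉₊ with h | h
  · simpa [h] using hkx
  · rw [Nat.cast_pred h]
    linarith

theorem mul_le_subdivisionIndex_add_one : k * x ≤ subdivisionIndex k x + 1 :=
  (Nat.le_ceil _).trans (mod_cast le_tsub_add)

theorem dist_le_of_subdivisionIndex_eq (hk : 0 < k) (hx : 0 ≤ x) (hy : 0 ≤ y)
    (h : subdivisionIndex k x = subdivisionIndex k y) : dist x y ≤ 1 / k := by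
  have hk' : (0 : ℝ) < k := mod_cast hk
  have hxl := subdivisionIndex_le_mul (k := k) hx
  have hxu := mul_le_subdivisionIndex_add_one (k := k) (x := x)
  have hyl := subdivisionIndex_le_mul (k := k) hy
  have hyu := mul_le_subdivisionIndex_add_one (k := k) (x := y)
  rw [h] at hxl hxu
  rw [Real.dist_eq, abs_sub_le_iff, le_div_iff₀' hk', le_div_iff₀' hk', mul_sub, mul_sub]
  constructor <;> linarith

theorem exists_dist_le_of_prod_lt_card {ι κ : Type*} [Fintype κ] {p : ι → EuclideanSpace ℝ κ}
    (hp : ∀ i t, p i t ∈ Set.Icc (0 : ℝ) 1) {k : κ → ℕ} (hk : ∀ t, 0 < k t) {T : Finset ι}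
    (hT : ∏ t, k t < #T) :
    ∃ i ∈ T, ∃ j ∈ T, i ≠ j ∧ dist (p i) (p j) ≤ √(∑ t, (1 / k t : ℝ) ^ 2) := by
  classical
  let cell (i : ι) (t : κ) : ℕ := subdivisionIndex (k t) (p i t)
  have hcell : ∀ i ∈ T, cell i ∈ Fintype.piFinset fun t ↦ range (k t) := fun i _ ↦
    Fintype.mem_piFinset.2 fun t ↦ mem_range.2 (subdivisionIndex_lt (hk t) (hp i t).2)
  obtain ⟨i, hi, j, hj, hij, hcell_eq⟩ :=
    exists_ne_map_eq_of_card_lt_of_maps_to (by simpa using hT) hcell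
  refine ⟨i, hi, j, hj, hij, ?_⟩
  rw [EuclideanSpace.dist_eq]
  gcongr with t
  exact dist_le_of_subdivisionIndex_eq (hk t) (hp i t).1 (hp j t).1 (congrFun hcell_eq t)

-- The quadratic condition is `1 / a² + 1 / b² ≤ 4 / n` cleared of denominators.
theorem exists_grid {n : ℕ} (hn : 2 ≤ n) (hn4 : n ≠ 4) :
    ∃ a b m : ℕ, 0 < a ∧ 0 < b ∧ n * (a ^ 2 + b ^ 2) ≤ 4 * a ^ 2 * b ^ 2 ∧
      n ≤ 10 * m ∧ 2 * m + a * b ≤ n + 1 := by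
  by_cases h3 : n = 3
  · exact ⟨1, 2, 1, by omega⟩
  by_cases h9 : 9 ≤ n ∧ n ≤ 12
  · exact ⟨2, 4, (n + 9) / 10, by omega⟩
  -- Otherwise a square grid with `⌈√(n / 2)⌉` cells along each side works.
  obtain ⟨g, hgn, hng⟩ : ∃ g, 2 * g ^ 2 + 1 ≤ n ∧ n ≤ 2 * (g + 1) ^ 2 := by
    have hle := Nat.sqrt_le' ((n - 1) / 2)
    have hlt := Nat.lt_succ_sqrt' ((n - 1) / 2)
    rw [Nat.succ_eq_add_one] at hlt
    exact ⟨Nat.sqrt ((n - 1) / 2), by omega, by omega⟩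
  refine ⟨g + 1, g + 1, (n + 9) / 10, by omega, by omega, ?_, by omega, ?_⟩
  · nlinarith [Nat.mul_le_mul_right ((g + 1) ^ 2) hng]
  · rw [← sq]
    rcases lt_or_ge g 4 with hg | hg
    · interval_cases g <;> omega
    · have : 5 * (g + 1) ^ 2 ≤ 8 * g ^ 2 := by nlinarith
      omega

end Grid

section Ball

variable {E : Type*} [NormedAddCommGroup E] [InnerProductSpace ℝ E]

theorem inner_neg_of_mem_convexHull {s t : Set E} (h : ∀ x ∈ s, ∀ y ∈ t, ⟪x, y⟫ < 0) {x y : E}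
    (hx : x ∈ convexHull ℝ s) (hy : y ∈ convexHull ℝ t) : ⟪x, y⟫ < 0 := by
  have hxt : ∀ z ∈ t, ⟪x, z⟫ < 0 := fun z hz ↦
    convexHull_min (fun w hw ↦ h w hw z hz)
      (convex_halfSpace_lt ((innerₗ E).flip z).isLinear 0) hx
  exact convexHull_min hxt (convex_halfSpace_lt (innerₗ E x).isLinear 0) hy

variable [FiniteDimensional ℝ E] {ι : Type*}

theorem exists_inner_nonneg_of_finrank_add_one_lt_card [Fintype ι] (v : ι → E)
    (h : finrank ℝ E + 1 < Fintype.card ι) : ∃ i j, i ≠ j ∧ 0 ≤ ⟪v i, v j⟫ := by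
  have hdep : ¬ AffineIndependent ℝ v := fun hv ↦ by
    have := hv.card_le_finrank_succ
    have := (vectorSpan ℝ (Set.range v)).finrank_le
    omega
  obtain ⟨I, u, huI, huIc⟩ := Convex.radon_partition hdep
  by_contra! hneg
  refine (inner_neg_of_mem_convexHull ?_ huI huIc).not_ge real_inner_self_nonneg
  rintro _ ⟨i, hi, rfl⟩ _ ⟨j, hj, rfl⟩
  exact hneg i j (ne_of_mem_of_not_mem hi hj)

theorem exists_dist_le_sqrt_two_mul_of_finrank_add_one_lt_card {p : ι → E} {c : E} {R : ℝ}
    (hp : ∀ i, p i ∈ Metric.closedBall c R) {T : Finset ι} (hT : finrank ℝ E + 1 < #T) :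
    ∃ i ∈ T, ∃ j ∈ T, i ≠ j ∧ dist (p i) (p j) ≤ √2 * R := by
  obtain ⟨i, j, hij, hinner⟩ :=
    exists_inner_nonneg_of_finrank_add_one_lt_card (fun i : T ↦ p i - c) (by simpa using hT)
  refine ⟨i, i.2, j, j.2, Subtype.coe_ne_coe.2 hij, ?_⟩
  have hi : ‖p i - c‖ ≤ R := mem_closedBall_iff_norm.1 (hp i)
  have hj : ‖p j - c‖ ≤ R := mem_closedBall_iff_norm.1 (hp j)
  have hR : 0 ≤ R := (norm_nonneg _).trans hi
  refine le_of_sq_le_sq ?_ (by positivity)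
  calc dist (p i) (p j) ^ 2 = ‖(p i - c) - (p j - c)‖ ^ 2 := by
        rw [dist_eq_norm, sub_sub_sub_cancel_right]
    _ = ‖p i - c‖ ^ 2 - 2 * ⟪p i - c, p j - c⟫ + ‖p j - c‖ ^ 2 := norm_sub_sq_real _ _
    _ ≤ R ^ 2 - 2 * 0 + R ^ 2 := by gcongr
    _ = (√2 * R) ^ 2 := by
        rw [mul_pow, Real.sq_sqrt zero_le_two]
        ring

theorem exists_dist_le_of_card_add_one_lt_card {κ : Type*} [Fintype κ]
    {p : ι → EuclideanSpace ℝ κ} (hp : ∀ i t, p i t ∈ Set.Icc (0 : ℝ) 1) {T : Finset ι}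
    (hT : Fintype.card κ + 1 < #T) :
    ∃ i ∈ T, ∃ j ∈ T, i ≠ j ∧ dist (p i) (p j) ≤ √(Fintype.card κ / 2) := by
  have hball : ∀ i, p i ∈ Metric.closedBall (WithLp.toLp 2 fun _ ↦ 1 / 2)
      √(Fintype.card κ / 4) := fun i ↦ by
    rw [Metric.mem_closedBall, EuclideanSpace.dist_eq]
    refine Real.sqrt_le_sqrt ?_
    calc ∑ t, dist (p i t) (1 / 2) ^ 2 ≤ ∑ _t : κ, (1 / 2 : ℝ) ^ 2 := by
          gcongr with t
          rw [Real.dist_eq, abs_sub_le_iff]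
          constructor <;> linarith [(hp i t).1, (hp i t).2]
      _ = Fintype.card κ / 4 := by
          rw [sum_const, card_univ, nsmul_eq_mul]
          ring
  have hscale : √2 * √(Fintype.card κ / 4) = √(Fintype.card κ / 2) := by
    rw [← Real.sqrt_mul zero_le_two]
    ring_nf
  rw [← hscale]
  exact exists_dist_le_sqrt_two_mul_of_finrank_add_one_lt_card hball (by simpa using hT)

end Ball

theorem two_mul_rpow_neg_half {x : ℝ} (hx : 0 ≤ x) : 2 * x ^ (-(1 / 2) : ℝ) = √(4 / x) := by
  rw [Real.rpow_neg hx, ← Real.sqrt_eq_rpow, Real.sqrt_div zero_le_four, div_eq_mul_inv,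
    show (4 : ℝ) = 2 ^ 2 by norm_num, Real.sqrt_sq zero_le_two]

section UnitSquare

variable {ι : Type*} {p : ι → EuclideanSpace ℝ (Fin 2)}

theorem exists_dist_le_of_mul_lt_card (hp : ∀ i t, p i t ∈ Set.Icc (0 : ℝ) 1) {n a b : ℕ}
    (hn : 0 < n) (ha : 0 < a) (hb : 0 < b)
    (hab : n * (a ^ 2 + b ^ 2) ≤ 4 * a ^ 2 * b ^ 2) {T : Finset ι} (hT : a * b < #T) :
    ∃ i ∈ T, ∃ j ∈ T, i ≠ j ∧ dist (p i) (p j) ≤ 2 * (n : ℝ) ^ (-(1 / 2) : ℝ) := by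
  obtain ⟨i, hi, j, hj, hij, hdist⟩ := exists_dist_le_of_prod_lt_card hp (k := ![a, b])
    (by simp [Fin.forall_fin_two, ha, hb]) (by simpa [Fin.prod_univ_two] using hT)
  refine ⟨i, hi, j, hj, hij, hdist.trans ?_⟩
  rw [two_mul_rpow_neg_half n.cast_nonneg, Fin.sum_univ_two]
  refine Real.sqrt_le_sqrt ?_
  have hab' : (n * (a ^ 2 + b ^ 2) : ℝ) ≤ 4 * a ^ 2 * b ^ 2 := mod_cast hab
  simp only [Matrix.cons_val_zero, Matrix.cons_val_one]
  field_simp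
  linarith

theorem exists_pairing_threshold {n : ℕ} (hn : 2 ≤ n)
    (hp : ∀ i t, p i t ∈ Set.Icc (0 : ℝ) 1) :
    ∃ k m : ℕ, n ≤ 10 * m ∧ 2 * m + k ≤ n + 1 ∧ ∀ T : Finset ι, k < #T →
      ∃ i ∈ T, ∃ j ∈ T, i ≠ j ∧ dist (p i) (p j) ≤ 2 * (n : ℝ) ^ (-(1 / 2) : ℝ) := by
  rcases eq_or_ne n 4 with rfl | hn4
  · refine ⟨3, 1, by norm_num, by norm_num, fun T hT ↦ ?_⟩
    have hside : √((Fintype.card (Fin 2) : ℝ) / 2) = 2 * ((4 : ℕ) : ℝ) ^ (-(1 / 2) : ℝ) := by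
      rw [two_mul_rpow_neg_half (Nat.cast_nonneg _)]
      norm_num
    rw [← hside]
    exact exists_dist_le_of_card_add_one_lt_card hp (by simpa using hT)
  · obtain ⟨a, b, m, ha, hb, hab, hnm, hm⟩ := exists_grid hn hn4
    exact ⟨a * b, m, hnm, hm, fun T ↦ exists_dist_le_of_mul_lt_card hp (by omega) ha hb hab⟩

end UnitSquare

theorem stmt12_general {ι : Type*} [Fintype ι] [Nontrivial ι] (p : ι → EuclideanSpace ℝ (Fin 2))
    (hp : ∀ i, ∀ t, p i t ∈ Set.Icc (0 : ℝ) 1) :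
    ∃ (m : ℕ) (a b : Fin m → ι),
      (Fintype.card ι : ℝ) / 10 ≤ (m : ℝ) ∧
      Function.Injective a ∧
      Function.Injective b ∧
      (∀ i j : Fin m, a i ≠ b j) ∧
      (∀ i : Fin m, dist (p (a i)) (p (b i)) ≤ 2 * (Fintype.card ι : ℝ) ^ (-(1 / 2) : ℝ)) := by
  obtain ⟨k, m, hm, hkm, hclose⟩ :=
    exists_pairing_threshold (Fintype.one_lt_card (α := ι)) hp
  obtain ⟨a, b, ha, hb, hab, hpairs⟩ := exists_disjoint_pairs_of_forall_card_lt hclose m univ hkm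
  have hm' : (Fintype.card ι : ℝ) ≤ 10 * m := mod_cast hm
  exact ⟨m, a, b, by linarith, ha, hb, hab, fun i ↦ (hpairs i).2.2⟩

/-- For every integer `n ≥ 2` and any `n` distinct points `p₁, …, pₙ ∈
[0,1]²`, there exist at least `n/10` pairwise disjoint (unordered) pairs `{p (a i), p (b i)}`
of these points (no point belongs to more than one pair) such that for every pair the
Euclidean distance between its two points is at most `2·n^(−1/2)`. -/
theorem stmt12 (n : ℕ) (hn : 2 ≤ n) (p : Fin n → EuclideanSpace ℝ (Fin 2))
    (hinj : Function.Injective p)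
    (hp : ∀ i, ∀ t, p i t ∈ Set.Icc (0 : ℝ) 1) :
    ∃ (m : ℕ) (a b : Fin m → Fin n),
      (n : ℝ) / 10 ≤ (m : ℝ) ∧
      Function.Injective a ∧
      Function.Injective b ∧
      (∀ i j : Fin m, a i ≠ b j) ∧
      (∀ i : Fin m, dist (p (a i)) (p (b i)) ≤ 2 * (n : ℝ) ^ (-(1 / 2) : ℝ)) := by
  have : Nontrivial (Fin n) := Fin.nontrivial_iff_two_le.2 hn
  simpa only [Fintype.card_fin] using stmt12_general p hp
end

section
/- Let δ > 0 and n ∈ ℕ, and suppose there is a finite set X ⊆ Ω with |X| = n such that d(ω, ω') ≥ δ for all distinct ω, ω' ∈ X. Then there exist n points p₁, …, pₙ ∈ [0,1]² and n lines ℓ₁, …, ℓₙ in ℝ² such that pᵢ ∈ ℓᵢ for every i, and for all i ≠ j the Euclidean distance from pᵢ to ℓⱼ is at least δ/(2√2). -/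
/-!
The map `(x, y) ↦ ((x + 1) / 2, (y + 1) / 2)` carries `[-1, 1]²` onto `[0, 1]²`, preserves slopes
and halves vertical distances. Since `(-θ, 1)` is normal to the lines of slope `θ`, the Euclidean
distance from a point to such a line is the vertical distance divided by `√(1 + θ ^ 2)`, and
`√(1 + θ ^ 2) ≤ √2` when `|θ| ≤ 1`.
-/

section InnerProductSpace

variable {𝕜 V P : Type*} [RCLike 𝕜] [NormedAddCommGroup V] [InnerProductSpace 𝕜 V]
  [MetricSpace P] [NormedAddTorsor V P]

theorem norm_inner_vsub_div_norm_le_infDist {s : AffineSubspace 𝕜 P} {v : V}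
    (hv : v ∈ s.directionᗮ) {q : P} (hq : q ∈ s) (p : P) :
    ‖inner 𝕜 v (p -ᵥ q)‖ / ‖v‖ ≤ Metric.infDist p (s : Set P) := by
  refine (Metric.le_infDist ⟨q, hq⟩).2 fun r hr ↦
    div_le_of_le_mul₀ (norm_nonneg v) dist_nonneg ?_
  have inner_eq_zero : inner 𝕜 v (r -ᵥ q) = 0 :=
    Submodule.inner_left_of_mem_orthogonal (AffineSubspace.vsub_mem_direction hr hq) hv
  calc ‖inner 𝕜 v (p -ᵥ q)‖ = ‖inner 𝕜 v (p -ᵥ r)‖ := by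
        rw [← vsub_add_vsub_cancel p r q, inner_add_right, inner_eq_zero, add_zero]
    _ ≤ ‖v‖ * ‖p -ᵥ r‖ := norm_inner_le_norm v _
    _ = dist p r * ‖v‖ := by rw [mul_comm, dist_eq_norm_vsub V]

end InnerProductSpace

/-- The line through `q` of slope `θ` in the Euclidean plane. -/
noncomputable def lineOfSlope (q : EuclideanSpace ℝ (Fin 2)) (θ : ℝ) :
    AffineSubspace ℝ (EuclideanSpace ℝ (Fin 2)) :=
  AffineSubspace.mk' q (Submodule.span ℝ {!₂[1, θ]})

theorem self_mem_lineOfSlope (q : EuclideanSpace ℝ (Fin 2)) (θ : ℝ) : q ∈ lineOfSlope q θ :=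
  AffineSubspace.self_mem_mk' q _

theorem direction_lineOfSlope (q : EuclideanSpace ℝ (Fin 2)) (θ : ℝ) :
    (lineOfSlope q θ).direction = Submodule.span ℝ {!₂[1, θ]} :=
  AffineSubspace.direction_mk' q _

theorem finrank_direction_lineOfSlope (q : EuclideanSpace ℝ (Fin 2)) (θ : ℝ) :
    Module.finrank ℝ (lineOfSlope q θ).direction = 1 := by
  rw [direction_lineOfSlope]
  exact finrank_span_singleton fun h ↦ one_ne_zero (α := ℝ) (congrArg (fun v ↦ v 0) h)

theorem normal_mem_orthogonal_direction_lineOfSlope (q : EuclideanSpace ℝ (Fin 2)) (θ : ℝ) :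
    !₂[-θ, 1] ∈ (lineOfSlope q θ).directionᗮ := by
  rw [direction_lineOfSlope, Submodule.mem_orthogonal_singleton_iff_inner_right]
  simp [PiLp.inner_apply, Fin.sum_univ_two]

/-- The signed height of `p` above the line of slope `θ` through `q`, measured vertically; it
transfers `vdist` to points of the Euclidean plane. -/
noncomputable def verticalOffset (p q : EuclideanSpace ℝ (Fin 2)) (θ : ℝ) : ℝ :=
  p 1 - q 1 - θ * (p 0 - q 0)

theorem abs_verticalOffset_div_sqrt_le_infDist_lineOfSlope
    (p q : EuclideanSpace ℝ (Fin 2)) (θ : ℝ) :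
    |verticalOffset p q θ| / √(1 + θ ^ 2) ≤
      Metric.infDist p (lineOfSlope q θ : Set (EuclideanSpace ℝ (Fin 2))) := by
  have inner_normal : inner ℝ !₂[-θ, 1] (p -ᵥ q) = verticalOffset p q θ := by
    simp only [verticalOffset, vsub_eq_sub, PiLp.inner_apply, PiLp.sub_apply, RCLike.inner_apply,
      Real.ringHom_apply, Fin.sum_univ_two, Matrix.cons_val_zero, Matrix.cons_val_one,
      Matrix.cons_val_fin_one]
    ring
  have norm_normal : ‖!₂[-θ, 1]‖ = √(1 + θ ^ 2) := by
    simp [EuclideanSpace.norm_eq, Fin.sum_univ_two, add_comm]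
  simpa only [inner_normal, norm_normal, Real.norm_eq_abs] using
    norm_inner_vsub_div_norm_le_infDist (normal_mem_orthogonal_direction_lineOfSlope q θ)
      (self_mem_lineOfSlope q θ) p

/-- The image of the point `(x, y)` of `ω = (x, y, θ)` under the homothety carrying `[-1, 1]²`
onto `[0, 1]²`. -/
noncomputable def rescaledPoint (ω : ℝ × ℝ × ℝ) : EuclideanSpace ℝ (Fin 2) :=
  !₂[(ω.1 + 1) / 2, (ω.2.1 + 1) / 2]

theorem rescaledPoint_mem_Icc {ω : ℝ × ℝ × ℝ} (hω : ω ∈ Omega) (t : Fin 2) :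
    rescaledPoint ω t ∈ Set.Icc (0 : ℝ) 1 := by
  obtain ⟨⟨hx, hx'⟩, ⟨hy, hy'⟩, -⟩ := hω
  have rescaled_mem_Icc {a : ℝ} (ha : -1 ≤ a) (ha' : a ≤ 1) : (a + 1) / 2 ∈ Set.Icc (0 : ℝ) 1 :=
    ⟨by linarith, by linarith⟩
  fin_cases t
  · exact rescaled_mem_Icc hx hx'
  · exact rescaled_mem_Icc hy hy'

theorem abs_verticalOffset_rescaledPoint (ω ω' : ℝ × ℝ × ℝ) :
    |verticalOffset (rescaledPoint ω) (rescaledPoint ω') ω'.2.2| = vdist ω ω' / 2 := by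
  have offset_eq : verticalOffset (rescaledPoint ω) (rescaledPoint ω') ω'.2.2 =
      (ω.2.1 - ω'.2.1 - ω'.2.2 * (ω.1 - ω'.1)) / 2 := by
    simp only [verticalOffset, rescaledPoint, Matrix.cons_val_zero, Matrix.cons_val_one,
      Matrix.cons_val_fin_one]
    ring
  rw [offset_eq, abs_div, abs_two, vdist]

theorem vdist_div_le_infDist_rescaledPoint (ω : ℝ × ℝ × ℝ) {ω' : ℝ × ℝ × ℝ}
    (hθ : |ω'.2.2| ≤ 1) :
    vdist ω ω' / (2 * √2) ≤ Metric.infDist (rescaledPoint ω)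
      (lineOfSlope (rescaledPoint ω') ω'.2.2 : Set (EuclideanSpace ℝ (Fin 2))) := by
  have slope_sq_le : 1 + ω'.2.2 ^ 2 ≤ 2 := by
    linarith [(sq_le_one_iff_abs_le_one ω'.2.2).2 hθ]
  calc vdist ω ω' / (2 * √2) = vdist ω ω' / 2 / √2 := (div_div _ _ _).symm
    _ ≤ vdist ω ω' / 2 / √(1 + ω'.2.2 ^ 2) := by
        have : 0 ≤ vdist ω ω' := abs_nonneg _
        gcongr
    _ ≤ _ := by
        rw [← abs_verticalOffset_rescaledPoint]
        exact abs_verticalOffset_div_sqrt_le_infDist_lineOfSlope _ _ _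

/-- Let `δ > 0` and `n ∈ ℕ`, and suppose there is a finite set `X ⊆ Ω` with
`|X| = n` such that `d(ω, ω') ≥ δ` for all distinct `ω, ω' ∈ X`. Then there exist `n`
points `p₁, …, pₙ ∈ [0,1]²` and `n` lines `ℓ₁, …, ℓₙ` in `ℝ²` (one-dimensional affine
subspaces) such that `pᵢ ∈ ℓᵢ` for every `i`, and for all `i ≠ j` the Euclidean distance
from `pᵢ` to `ℓⱼ` is at least `δ/(2√2)`. -/
theorem stmt16 (δ : ℝ) (hδ : 0 < δ) (n : ℕ) (X : Finset (ℝ × ℝ × ℝ))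
    (hXΩ : ↑X ⊆ Omega) (hcard : X.card = n)
    (hsep : ∀ ω ∈ X, ∀ ω' ∈ X, ω ≠ ω' → δ ≤ vdist ω ω') :
    ∃ (p : Fin n → EuclideanSpace ℝ (Fin 2))
      (ℓ : Fin n → AffineSubspace ℝ (EuclideanSpace ℝ (Fin 2))),
      (∀ i, Module.finrank ℝ (ℓ i).direction = 1) ∧
      (∀ i, ∀ t, p i t ∈ Set.Icc (0 : ℝ) 1) ∧
      (∀ i, p i ∈ ℓ i) ∧
      (∀ i j, i ≠ j →
        δ / (2 * Real.sqrt 2) ≤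
          Metric.infDist (p i) (ℓ j : Set (EuclideanSpace ℝ (Fin 2)))) := by
  let e : Fin n ≃ X := (X.equivFinOfCardEq hcard).symm
  have mem_Omega (i : Fin n) : (e i : ℝ × ℝ × ℝ) ∈ Omega := hXΩ (e i).2
  refine ⟨fun i ↦ rescaledPoint (e i), fun i ↦ lineOfSlope (rescaledPoint (e i)) (e i).1.2.2,
    fun i ↦ finrank_direction_lineOfSlope _ _, fun i ↦ rescaledPoint_mem_Icc (mem_Omega i),
    fun i ↦ self_mem_lineOfSlope _ _, fun i j hij ↦ ?_⟩
  have hne : (e i : ℝ × ℝ × ℝ) ≠ e j := Subtype.coe_injective.ne (e.injective.ne hij)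
  calc δ / (2 * √2) ≤ vdist (e i) (e j) / (2 * √2) := by
        gcongr
        exact hsep _ (e i).2 _ (e j).2 hne
    _ ≤ _ := vdist_div_le_infDist_rescaledPoint _ (abs_le.2 (mem_Omega j).2.2)
end
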